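/- arXiv:2001.09274 — 2 statements merged into one kernel-verified Lean document; each statement's English description precedes it below -/
import Mathlib

section
/- Let λ_1, …, λ_n and α_1, …, α_n be real numbers and let M be a positive integer. Assume that for all integers u_1, …, u_n with |u_j| ≤ M for every j, the equality u_1λ_1 + ⋯ + u_nλ_n = 0 implies that u_1α_1 + ⋯ + u_nα_n is an integer. Assume moreover that the set {|u_1λ_1 + ⋯ + u_nλ_n| : u_j ∈ ℤ, |u_j| ≤ M, u_1λ_1 + ⋯ + u_nλ_n ≠ 0} is nonempty, and let Λ be its minimum. Then for all positive real numbers δ_1, …, δ_n and all reals T_1 < T_2, writing Δ = δ_1 + ⋯ + δ_n, one has inf_{t ∈ [T_1, T_2]} ∑_{j=1}^n δ_j ‖λ_j t − α_j‖² ≤ (Δ/4)·sin²(π/(2(M+1))) + Δ·M^n/(4π(T_2 − T_1)Λ). -/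
open Filter Real Set

/-- Distance from a real number to the nearest integer. -/
noncomputable def distNearestInt (x : ℝ) : ℝ := |x - round x|

lemma aux_dist (x : ℝ) : distNearestInt x ^ 2 ≤ (1 - Real.cos (2 * π * x)) / 8 := by
  unfold distNearestInt
  have h1 := abs_sub_round x
  set r := |x - round x| with hr
  have hr0 : 0 ≤ r := abs_nonneg _
  have hc : Real.cos (2 * π * x) = Real.cos (2 * (π * r)) := by
    have e1 : Real.cos (2 * (π * r)) = Real.cos (2 * π * (x - round x)) := by
      rw [← Real.cos_abs (2 * π * (x - round x)), abs_mul, abs_of_pos Real.two_pi_pos, ← hr]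
      ring_nf
    rw [e1, show 2 * π * (x - round x) = 2 * π * x - (round x : ℤ) * (2 * π) by ring,
      Real.cos_sub_int_mul_two_pi]
  have hs : 2 * r ≤ Real.sin (π * r) := by
    have := Real.mul_le_sin (x := π * r) (by positivity) (by nlinarith [Real.pi_pos])
    calc 2 * r = 2 / π * (π * r) := by field_simp
      _ ≤ _ := this
  rw [hc, Real.cos_two_mul]
  nlinarith [Real.sin_sq_add_cos_sq (π * r)]

lemma aux_dist_le (x : ℝ) : distNearestInt x ^ 2 ≤ 1 / 4 := by
  have h := Real.neg_one_le_cos (2 * π * x)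
  have := aux_dist x
  linarith

lemma aux_int (μ β a b L : ℝ) (hab : a < b) (hL : 0 < L) (hμ : μ ≠ 0 → L ≤ |μ|)
    (hβ : μ = 0 → ∃ m : ℤ, β = m) :
    (if μ = 0 then b - a else -(1 / (π * L))) ≤
      ∫ t in a..b, Real.cos (2 * π * (μ * t - β)) := by
  split_ifs with h
  · obtain ⟨m, rfl⟩ := hβ h
    subst h
    have : ∀ t : ℝ, Real.cos (2 * π * (0 * t - (m : ℝ))) = 1 := by
      intro t
      rw [show 2 * π * (0 * t - (m : ℝ)) = 0 - (m : ℝ) * (2 * π) by ring,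
        Real.cos_sub_int_mul_two_pi, Real.cos_zero]
    simp only [this]
    simp
  · have e : ∀ t : ℝ, Real.cos (2 * π * (μ * t - β)) =
        Real.cos ((2 * π * μ) * t - 2 * π * β) := by
      intro t; ring_nf
    simp only [e]
    have hc : 2 * π * μ ≠ 0 := by positivity
    rw [intervalIntegral.integral_comp_mul_sub Real.cos hc, integral_cos, smul_eq_mul]
    set S := Real.sin (2 * π * μ * b - 2 * π * β) - Real.sin (2 * π * μ * a - 2 * π * β) with hS
    have hS2 : |S| ≤ 2 := by
      rw [abs_le]
      constructor <;>
      linarith [Real.neg_one_le_sin (2 * π * μ * b - 2 * π * β),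
        Real.neg_one_le_sin (2 * π * μ * a - 2 * π * β),
        Real.sin_le_one (2 * π * μ * b - 2 * π * β), Real.sin_le_one (2 * π * μ * a - 2 * π * β)]
    have hh : |(2 * π * μ)⁻¹ * S| ≤ 1 / (π * L) := by
      rw [abs_mul, abs_inv, abs_mul, abs_of_pos Real.two_pi_pos]
      have hm := hμ h
      have hp := Real.pi_pos
      have hm0 : 0 < |μ| := lt_of_lt_of_le hL hm
      calc (2 * π * |μ|)⁻¹ * |S| ≤ (2 * π * |μ|)⁻¹ * 2 := by gcongr
        _ = 1 / (π * |μ|) := by field_simp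
        _ ≤ 1 / (π * L) := by gcongr
    exact (abs_le.mp hh).1

lemma aux_main {n : ℕ} (lam α : Fin n → ℝ) (M : ℕ) (a b L : ℝ) (hab : a < b) (hL : 0 < L)
    (hindep : ∀ u : Fin n → ℤ, (∀ j, |u j| ≤ (M : ℤ)) →
      (∑ j, (u j : ℝ) * lam j) = 0 → ∃ m : ℤ, (∑ j, (u j : ℝ) * α j) = (m : ℝ))
    (hLam : ∀ u : Fin n → ℤ, (∀ j, |u j| ≤ (M : ℤ)) →
      (∑ j, (u j : ℝ) * lam j) ≠ 0 → L ≤ |∑ j, (u j : ℝ) * lam j|)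
    (g : Fin n → ℝ → ℝ) (s : Fin n → Finset (ℕ × ℕ)) (w : Fin n → ℕ × ℕ → ℝ)
    (f : Fin n → ℕ × ℕ → ℤ) (hw : ∀ j, ∀ p ∈ s j, 0 ≤ w j p)
    (hf : ∀ j, ∀ p ∈ s j, |f j p| ≤ (M : ℤ))
    (hg : ∀ j x, (g j x : ℂ) =
      ∑ p ∈ s j, (w j p : ℂ) * Complex.exp (2 * π * Complex.I * (f j p * x))) :
    (b - a) * ∏ j, (∑ p ∈ s j, w j p * (if f j p = 0 then 1 else 0)) - (∏ j, g j 0) / (π * L)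
      ≤ ∫ t in a..b, ∏ j, g j (lam j * t - α j) := by
  have hg0 : ∀ j, g j 0 = ∑ p ∈ s j, w j p := by
    intro j
    have := hg j 0
    simp only [Complex.ofReal_zero, mul_zero, Complex.exp_zero, mul_one] at this
    exact_mod_cast this
  have hexp : ∀ t : ℝ, ∏ j, g j (lam j * t - α j) =
      ∑ p ∈ Fintype.piFinset s, (∏ j, w j (p j)) *
        Real.cos (2 * π * ((∑ j, (f j (p j) : ℝ) * lam j) * t - ∑ j, (f j (p j) : ℝ) * α j)) := by
    intro t
    have h1 : ((∏ j, g j (lam j * t - α j) : ℝ) : ℂ) =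
      ∑ p ∈ Fintype.piFinset s, ((∏ j, w j (p j) : ℝ) : ℂ) * Complex.exp
        (((2 * π * ((∑ j, (f j (p j) : ℝ) * lam j) * t - ∑ j, (f j (p j) : ℝ) * α j) : ℝ) : ℂ)
          * Complex.I) := by
      rw [Complex.ofReal_prod]
      simp only [hg]
      rw [Finset.prod_univ_sum]
      refine Finset.sum_congr rfl fun p _ => ?_
      rw [Finset.prod_mul_distrib, ← Complex.exp_sum, Complex.ofReal_prod]
      congr 2
      push_cast
      rw [Finset.sum_mul, ← Finset.sum_sub_distrib, Finset.mul_sum, Finset.sum_mul]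
      refine Finset.sum_congr rfl fun j _ => ?_
      ring
    have h2 := congrArg Complex.re h1
    rw [Complex.ofReal_re, Complex.re_sum] at h2
    rw [h2]
    refine Finset.sum_congr rfl fun p _ => ?_
    rw [Complex.re_ofReal_mul, Complex.exp_ofReal_mul_I_re]
  simp only [hexp, hg0]
  rw [intervalIntegral.integral_finsetSum
    (fun p _ => Continuous.intervalIntegrable (by fun_prop) _ _)]
  simp only [intervalIntegral.integral_const_mul]
  rw [Finset.prod_univ_sum, Finset.prod_univ_sum, Finset.mul_sum, Finset.sum_div,
    ← Finset.sum_sub_distrib]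
  refine Finset.sum_le_sum fun p hp => ?_
  rw [Fintype.mem_piFinset] at hp
  have hu : ∀ j, |f j (p j)| ≤ (M : ℤ) := fun j => hf j _ (hp j)
  have hb : 0 ≤ ∏ j, w j (p j) := Finset.prod_nonneg fun j _ => hw j _ (hp j)
  have hI := aux_int (∑ j, (f j (p j) : ℝ) * lam j) (∑ j, (f j (p j) : ℝ) * α j) a b L hab hL
    (hLam _ hu) (hindep _ hu)
  rw [Finset.prod_mul_distrib]
  have hpl : 0 ≤ 1 / (π * L) := by have := Real.pi_pos; positivity
  have key : (b - a) * (∏ j, (if f j (p j) = 0 then (1:ℝ) else 0)) - 1 / (π * L) ≤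
      ∫ t in a..b, Real.cos (2 * π * ((∑ j, (f j (p j) : ℝ) * lam j) * t
        - ∑ j, (f j (p j) : ℝ) * α j)) := by
    refine le_trans ?_ hI
    by_cases hz : ∀ j, f j (p j) = 0
    · simp only [hz]
      simp
      have := hpl
      rw [one_div, mul_inv] at this
      linarith
    · push Not at hz
      obtain ⟨j, hj⟩ := hz
      rw [Finset.prod_eq_zero (Finset.mem_univ j) (by simp [hj])]
      split_ifs <;> linarith
  calc _ = (∏ j, w j (p j)) *
      ((b - a) * (∏ j, (if f j (p j) = 0 then (1:ℝ) else 0)) - 1 / (π * L)) := by ring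
    _ ≤ _ := mul_le_mul_of_nonneg_left key hb

/-- The Fejer type kernel. -/
noncomputable def auxP (M : ℕ) (θ x : ℝ) : ℂ :=
  ∑ k ∈ Finset.range M, (Real.sin ((k + 1 : ℝ) * θ) : ℂ) * Complex.exp (2 * π * Complex.I * (k * x))

noncomputable def auxK (M : ℕ) (θ x : ℝ) : ℝ := Complex.normSq (auxP M θ x)

lemma auxP_conj (M : ℕ) (θ x : ℝ) : (starRingEnd ℂ) (auxP M θ x) =
    ∑ k ∈ Finset.range M, (Real.sin ((k + 1 : ℝ) * θ) : ℂ) *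
      Complex.exp (2 * π * Complex.I * (-k * x)) := by
  unfold auxP
  rw [map_sum]
  refine Finset.sum_congr rfl fun k _ => ?_
  rw [map_mul, Complex.conj_ofReal, ← Complex.exp_conj]
  congr 2
  simp only [map_mul, map_neg, Complex.conj_ofReal, Complex.conj_I, map_natCast, map_ofNat]
  ring

lemma auxK_exp (M : ℕ) (θ x : ℝ) : (auxK M θ x : ℂ) =
    ∑ p ∈ Finset.range M ×ˢ Finset.range M,
      ((Real.sin ((p.1 + 1 : ℝ) * θ) * Real.sin ((p.2 + 1 : ℝ) * θ) : ℝ) : ℂ) *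
        Complex.exp (2 * π * Complex.I * ((((p.1 : ℤ) - (p.2 : ℤ) : ℤ) : ℂ) * x)) := by
  unfold auxK
  rw [← Complex.mul_conj, auxP_conj, auxP, Finset.sum_mul_sum, Finset.sum_product]
  refine Finset.sum_congr rfl fun k _ => Finset.sum_congr rfl fun l _ => ?_
  rw [mul_mul_mul_comm, ← Complex.exp_add]
  push_cast
  congr 2
  ring

lemma aux_tele (θ : ℝ) (z : ℂ) (N : ℕ) :
    (z ^ 2 + 1 - 2 * (Real.cos θ : ℂ) * z) *
      ∑ k ∈ Finset.range N, (Real.sin ((k + 1 : ℝ) * θ) : ℂ) * z ^ k =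
    (Real.sin θ : ℂ) + (Real.sin (N * θ) : ℂ) * z ^ (N + 1)
      - (Real.sin ((N + 1 : ℝ) * θ) : ℂ) * z ^ N := by
  induction N with
  | zero => simp
  | succ N ih =>
    rw [Finset.sum_range_succ, mul_add, ih]
    have h : Real.sin (((N + 1 : ℕ) + 1 : ℝ) * θ) =
        2 * Real.cos θ * Real.sin ((N + 1 : ℝ) * θ) - Real.sin (N * θ) := by
      push_cast
      rw [show ((N : ℝ) + 1 + 1) * θ = (N + 1) * θ + θ by ring,
        show (N : ℝ) * θ = (N + 1) * θ - θ by ring, Real.sin_add, Real.sin_sub]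
      ring
    rw [h]
    push_cast
    ring

lemma auxQ_exp (M : ℕ) (θ x : ℝ) (hθ : (M + 1 : ℝ) * θ = π) :
    (((Real.cos (2 * π * x) - Real.cos θ) * auxK M θ x : ℝ) : ℂ) =
    ∑ p ∈ Finset.range M ×ˢ Finset.range 2,
      ((Real.sin θ * Real.sin ((p.1 + 1 : ℝ) * θ) / 2 : ℝ) : ℂ) *
        Complex.exp (2 * π * Complex.I *
          (((if p.2 = 0 then (p.1 : ℤ) + 1 else -((p.1 : ℤ) + 1) : ℤ) : ℂ) * x)) := by
  set z := Complex.exp (2 * π * Complex.I * x) with hz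
  have hz0 : z ≠ 0 := Complex.exp_ne_zero _
  have hzk : ∀ k : ℕ, Complex.exp (2 * π * Complex.I * (k * x)) = z ^ k := by
    intro k
    rw [hz, ← Complex.exp_nat_mul]; congr 1; ring
  have hzk' : ∀ k : ℕ, Complex.exp (2 * π * Complex.I * (-k * x)) = (z ^ k)⁻¹ := by
    intro k
    rw [← hzk, ← Complex.exp_neg]; congr 1; ring
  have hP : auxP M θ x = ∑ k ∈ Finset.range M, (Real.sin ((k + 1 : ℝ) * θ) : ℂ) * z ^ k := by
    unfold auxP; simp only [hzk]
  have hPc : (starRingEnd ℂ) (auxP M θ x) =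
      ∑ k ∈ Finset.range M, (Real.sin ((k + 1 : ℝ) * θ) : ℂ) * (z ^ k)⁻¹ := by
    rw [auxP_conj]; simp only [hzk']
  have hcos : (Real.cos (2 * π * x) : ℂ) = (z + z⁻¹) / 2 := by
    rw [Complex.ofReal_cos, Complex.cos, hz, ← Complex.exp_neg]
    push_cast
    congr 3 <;> ring
  have hsM : Real.sin (M * θ) = Real.sin θ := by
    rw [show (M : ℝ) * θ = π - θ by linarith, Real.sin_pi_sub]
  have hT : ((Real.cos (2 * π * x) : ℂ) - Real.cos θ) * auxP M θ x =
      (Real.sin θ : ℂ) / 2 * (z⁻¹ + z ^ M) := by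
    have := aux_tele θ z M
    rw [← hP, hθ, Real.sin_pi, hsM] at this
    rw [hcos]
    have h2 : ((z + z⁻¹) / 2 - (Real.cos θ : ℂ)) =
      (z ^ 2 + 1 - 2 * (Real.cos θ : ℂ) * z) * (z⁻¹ / 2) := by field_simp
    rw [h2, mul_right_comm, this, pow_succ]
    field_simp
    simp
  have hL : (((Real.cos (2 * π * x) - Real.cos θ) * auxK M θ x : ℝ) : ℂ) =
      (Real.sin θ : ℂ) / 2 * (z⁻¹ + z ^ M) *
      ∑ k ∈ Finset.range M, (Real.sin ((k + 1 : ℝ) * θ) : ℂ) * (z ^ k)⁻¹ := by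
    rw [← hPc, ← hT, mul_assoc (_ - _), Complex.mul_conj, auxK]
    push_cast
    rfl
  rw [hL, Finset.sum_product]
  have hrefl : z ^ M * ∑ k ∈ Finset.range M, (Real.sin ((k + 1 : ℝ) * θ) : ℂ) * (z ^ k)⁻¹ =
      ∑ k ∈ Finset.range M, (Real.sin ((k + 1 : ℝ) * θ) : ℂ) * z ^ (k + 1) := by
    rw [← Finset.sum_range_reflect (fun k => (Real.sin ((k + 1 : ℝ) * θ) : ℂ) * z ^ (k + 1)),
      Finset.mul_sum]
    refine Finset.sum_congr rfl fun k hk => ?_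
    have hk' := Finset.mem_range.mp hk
    obtain ⟨d, rfl⟩ : ∃ d, M = k + 1 + d := ⟨M - (k + 1), by omega⟩
    rw [show k + 1 + d - 1 - k = d by omega]
    have : Real.sin ((d + 1 : ℝ) * θ) = Real.sin ((k + 1 : ℝ) * θ) := by
      rw [← Real.sin_pi_sub ((k + 1 : ℝ) * θ), ← hθ]
      congr 1; push_cast; ring
    rw [this]
    field_simp
    ring
  rw [mul_assoc, add_mul, hrefl, Finset.mul_sum, ← Finset.sum_add_distrib, Finset.mul_sum]
  refine Finset.sum_congr rfl fun k _ => ?_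
  simp only [Finset.sum_range_succ, Finset.sum_range_zero]
  have e1 := hzk (k + 1)
  have e2 := hzk' (k + 1)
  push_cast at e1 e2
  simp only [if_true, one_ne_zero, if_false, zero_add]
  push_cast
  rw [e1, e2, pow_succ]
  field_simp
  ring

set_option maxHeartbeats 1000000 in
/-- Chen's lemma on simultaneous Diophantine approximation. -/
theorem chen_diophantine (n : ℕ) (hn : 0 < n) (lam α : Fin n → ℝ) (M : ℕ) (hM : 0 < M)
    (hindep : ∀ u : Fin n → ℤ, (∀ j, |u j| ≤ (M : ℤ)) →
      (∑ j, (u j : ℝ) * lam j) = 0 → ∃ m : ℤ, (∑ j, (u j : ℝ) * α j) = (m : ℝ))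
    (Λ : ℝ)
    (hΛ : IsLeast {x : ℝ | ∃ u : Fin n → ℤ, (∀ j, |u j| ≤ (M : ℤ)) ∧
      (∑ j, (u j : ℝ) * lam j) ≠ 0 ∧ x = |∑ j, (u j : ℝ) * lam j|} Λ)
    (δ : Fin n → ℝ) (hδ : ∀ j, 0 < δ j) (T₁ T₂ : ℝ) (hT : T₁ < T₂) :
    sInf ((fun t => ∑ j, δ j * (distNearestInt (lam j * t - α j)) ^ 2) '' Set.Icc T₁ T₂) ≤
      (∑ j, δ j) / 4 * (Real.sin (π / (2 * ((M : ℝ) + 1)))) ^ 2 +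
      (∑ j, δ j) * (M : ℝ) ^ n / (4 * π * (T₂ - T₁) * Λ) := by
  have hL : 0 < Λ := by
    obtain ⟨u, _, h, rfl⟩ := hΛ.1
    exact abs_pos.mpr h
  have hLam : ∀ u : Fin n → ℤ, (∀ j, |u j| ≤ (M : ℤ)) →
      (∑ j, (u j : ℝ) * lam j) ≠ 0 → Λ ≤ |∑ j, (u j : ℝ) * lam j| :=
    fun u hu h => hΛ.2 ⟨u, hu, h, rfl⟩
  have hπ := Real.pi_pos
  have hD : 0 ≤ ∑ j, δ j := Finset.sum_nonneg fun j _ => (hδ j).le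
  have hTT : 0 < T₂ - T₁ := sub_pos.mpr hT
  set D := ∑ j, δ j with hDdef
  set θ : ℝ := π / (M + 1) with hθdef
  have hθ : (M + 1 : ℝ) * θ = π := by rw [hθdef]; field_simp
  have hθ0 : 0 < θ := by positivity
  have hM1 : (1 : ℝ) ≤ M := by exact_mod_cast hM
  have hsin : (Real.sin (π / (2 * ((M : ℝ) + 1)))) ^ 2 = (1 - Real.cos θ) / 2 := by
    rw [show π / (2 * ((M : ℝ) + 1)) = θ / 2 by rw [hθdef]; field_simp, Real.sin_sq,
      Real.cos_sq]
    ring_nf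
  have hcos1 : Real.cos θ < 1 := by
    have h := Real.cos_lt_cos_of_nonneg_of_le_pi (x := 0) (y := θ) le_rfl (by nlinarith) hθ0
    simpa using h
  set R := (M : ℝ) ^ n / (π * (T₂ - T₁) * Λ) with hR
  have hR0 : 0 ≤ R := by positivity
  have hrhs : D / 4 * (Real.sin (π / (2 * ((M : ℝ) + 1)))) ^ 2 +
      D * (M : ℝ) ^ n / (4 * π * (T₂ - T₁) * Λ) = D / 8 * (1 - Real.cos θ) + D / 4 * R := by
    rw [hsin, hR]
    field_simp
    ring
  rw [hrhs]
  set F := (fun t => ∑ j, δ j * (distNearestInt (lam j * t - α j)) ^ 2) with hF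
  have hbdd : BddBelow (F '' Set.Icc T₁ T₂) := by
    refine ⟨0, ?_⟩
    rintro _ ⟨t, _, rfl⟩
    exact Finset.sum_nonneg fun j _ => mul_nonneg (hδ j).le (sq_nonneg _)
  have hinf : ∀ t ∈ Set.Icc T₁ T₂, sInf (F '' Set.Icc T₁ T₂) ≤ F t :=
    fun t ht => csInf_le hbdd ⟨t, ht, rfl⟩
  by_cases hcase : R ≤ (1 + Real.cos θ) / 2
  swap
  · push Not at hcase
    refine (hinf T₁ ⟨le_rfl, hT.le⟩).trans ?_
    have : F T₁ ≤ D / 4 := by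
      rw [hF, hDdef, Finset.sum_div]
      refine Finset.sum_le_sum fun j _ => ?_
      have := mul_le_mul_of_nonneg_left (aux_dist_le (lam j * T₁ - α j)) (hδ j).le
      linarith
    nlinarith
  -- main case
  by_contra! hcon
  set I := sInf (F '' Set.Icc T₁ T₂) with hI
  set E := D / 4 * R with hE
  set K : ℝ → ℝ := fun t => ∏ j, auxK M θ (lam j * t - α j) with hK
  set C : ℝ := ∑ k ∈ Finset.range M, (Real.sin ((k + 1 : ℝ) * θ)) ^ 2 with hC
  set A : ℝ := auxK M θ 0 with hA
  have hsinpos : ∀ k ∈ Finset.range M, 0 < Real.sin ((k + 1 : ℝ) * θ) := by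
    intro k hk
    have hk' : (k + 1 : ℝ) ≤ M := by exact_mod_cast Finset.mem_range.mp hk
    refine Real.sin_pos_of_pos_of_lt_pi (by positivity) ?_
    nlinarith
  have hsin1 : 0 ≤ Real.sin θ := by
    have := hsinpos 0 (Finset.mem_range.mpr hM)
    simpa using this.le
  have hCpos : 0 < C := Finset.sum_pos (fun k hk => pow_pos (hsinpos k hk) 2)
    ⟨0, Finset.mem_range.mpr hM⟩
  have hA0 : 0 ≤ A := Complex.normSq_nonneg _
  have hAC : A ≤ M * C := by
    have : A = (∑ k ∈ Finset.range M, Real.sin ((k + 1 : ℝ) * θ)) ^ 2 := by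
      have h := auxK_exp M θ 0
      simp only [Complex.ofReal_zero, mul_zero, Complex.exp_zero, mul_one] at h
      rw [sq, Finset.sum_mul_sum, ← Finset.sum_product']
      exact_mod_cast h
    rw [this]
    have h := sq_sum_le_card_mul_sum_sq (s := Finset.range M)
      (f := fun k : ℕ => Real.sin ((k + 1 : ℝ) * θ))
    simpa using h
  have hAn : A ^ n ≤ (M : ℝ) ^ n * C ^ n := by
    rw [← mul_pow]; gcongr
  have hdiff : ∀ p ∈ Finset.range M ×ˢ Finset.range M, |(p.1 : ℤ) - (p.2 : ℤ)| ≤ (M : ℤ) := by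
    intro p hp
    rw [Finset.mem_product, Finset.mem_range, Finset.mem_range] at hp
    rw [abs_le]; omega
  have hK1 : (T₂ - T₁) * C ^ n - A ^ n / (π * Λ) ≤ ∫ t in T₁..T₂, K t := by
    have h := aux_main lam α M T₁ T₂ Λ hT hL hindep hLam (fun _ => auxK M θ)
      (fun _ => Finset.range M ×ˢ Finset.range M)
      (fun _ p => Real.sin ((p.1 + 1 : ℝ) * θ) * Real.sin ((p.2 + 1 : ℝ) * θ))
      (fun _ p => (p.1 : ℤ) - (p.2 : ℤ))
      (fun _ p hp => by
        rw [Finset.mem_product] at hp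
        exact (mul_pos (hsinpos _ hp.1) (hsinpos _ hp.2)).le)
      (fun _ p hp => hdiff p hp)
      (fun _ x => auxK_exp M θ x)
    have hc : ∑ p ∈ Finset.range M ×ˢ Finset.range M,
        Real.sin ((p.1 + 1 : ℝ) * θ) * Real.sin ((p.2 + 1 : ℝ) * θ) *
          (if (p.1 : ℤ) - (p.2 : ℤ) = 0 then (1 : ℝ) else 0) = C := by
      rw [Finset.sum_product, hC]
      refine Finset.sum_congr rfl fun k hk => ?_
      rw [Finset.sum_eq_single k]
      · simp [sq]
      · intro l _ hl
        rw [if_neg (by omega), mul_zero]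
      · intro h; exact absurd hk h
    rw [hc] at h
    simpa using h
  have hK2 : ∀ j, -((1 - Real.cos θ) * A ^ n / (π * Λ)) ≤
      ∫ t in T₁..T₂, (Real.cos (2 * π * (lam j * t - α j)) - Real.cos θ) * K t := by
    intro j
    have h := aux_main lam α M T₁ T₂ Λ hT hL hindep hLam
      (fun i x => (if i = j then Real.cos (2 * π * x) - Real.cos θ else 1) * auxK M θ x)
      (fun i => if i = j then Finset.range M ×ˢ Finset.range 2
        else Finset.range M ×ˢ Finset.range M)
      (fun i p => if i = j then Real.sin θ * Real.sin ((p.1 + 1 : ℝ) * θ) / 2 else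
        Real.sin ((p.1 + 1 : ℝ) * θ) * Real.sin ((p.2 + 1 : ℝ) * θ))
      (fun i p => if i = j then (if p.2 = 0 then (p.1 : ℤ) + 1 else -((p.1 : ℤ) + 1))
        else (p.1 : ℤ) - (p.2 : ℤ))
      (fun i p hp => by
        by_cases hij : i = j
        · simp only [hij, if_true] at hp ⊢
          rw [Finset.mem_product] at hp
          have := (hsinpos _ hp.1).le
          positivity
        · simp only [hij, if_false] at hp ⊢
          rw [Finset.mem_product] at hp
          exact (mul_pos (hsinpos _ hp.1) (hsinpos _ hp.2)).le)
      (fun i p hp => by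
        by_cases hij : i = j
        · simp only [hij, if_true] at hp ⊢
          rw [Finset.mem_product, Finset.mem_range] at hp
          rw [abs_le]
          split_ifs <;> omega
        · simp only [hij, if_false] at hp ⊢
          exact hdiff p hp)
      (fun i x => by
        by_cases hij : i = j
        · simp only [hij, if_true]
          exact auxQ_exp M θ x hθ
        · simp only [hij, if_false, one_mul]
          exact auxK_exp M θ x)
    rw [Finset.prod_eq_zero (Finset.mem_univ j) (by
      refine Finset.sum_eq_zero fun p _ => ?_
      simp only [if_true]
      rw [if_neg (by split_ifs <;> omega), mul_zero]), mul_zero, zero_sub] at h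
    simp only [Finset.prod_mul_distrib, Finset.prod_ite_eq', Finset.mem_univ, if_true,
      Finset.prod_const, Finset.card_univ, Fintype.card_fin, mul_zero, Real.cos_zero] at h
    exact h
  have hKcont : Continuous K := by
    have : Continuous (auxK M θ) := by
      unfold auxK auxP
      exact Complex.continuous_normSq.comp (by fun_prop)
    exact continuous_finsetProd _ fun j _ => this.comp (by fun_prop)
  have hKnn : ∀ t, 0 ≤ K t := fun t => Finset.prod_nonneg fun j _ => Complex.normSq_nonneg _
  clear_value K
  set J := ∫ t in T₁..T₂, K t with hJ
  set X := (M : ℝ) ^ n * C ^ n / (π * Λ) with hX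
  have hXR : X = R * (T₂ - T₁) * C ^ n := by rw [hX, hR]; field_simp
  have hAX : A ^ n / (π * Λ) ≤ X := by rw [hX]; gcongr
  have hCn : 0 < C ^ n := pow_pos hCpos n
  have hJlow : (1 - R) * ((T₂ - T₁) * C ^ n) ≤ J := by
    have : (T₂ - T₁) * C ^ n - X ≤ J := by linarith
    rw [hXR] at this; linarith
  have hJpos : 0 < J := by
    refine lt_of_lt_of_le ?_ hJlow
    have : 0 < 1 - R := by linarith
    exact mul_pos this (mul_pos hTT hCn)
  -- upper bound for the integral
  have hint : I * J ≤ ∫ t in T₁..T₂, (∑ j, δ j * ((1 - Real.cos (2 * π * (lam j * t - α j))) / 8)) * K t := by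
    rw [hJ, ← intervalIntegral.integral_const_mul]
    refine intervalIntegral.integral_mono_on hT.le
      (Continuous.intervalIntegrable (by fun_prop) _ _)
      (Continuous.intervalIntegrable (by fun_prop) _ _) fun t ht => ?_
    refine mul_le_mul_of_nonneg_right ((hinf t ht).trans ?_) (hKnn t)
    exact Finset.sum_le_sum fun j _ => mul_le_mul_of_nonneg_left (aux_dist _) (hδ j).le
  have heq : ∫ t in T₁..T₂, (∑ j, δ j * ((1 - Real.cos (2 * π * (lam j * t - α j))) / 8)) * K t
      = D / 8 * (1 - Real.cos θ) * J - ∑ j, δ j / 8 *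
        ∫ t in T₁..T₂, (Real.cos (2 * π * (lam j * t - α j)) - Real.cos θ) * K t := by
    have e : ∀ t, (∑ j, δ j * ((1 - Real.cos (2 * π * (lam j * t - α j))) / 8)) * K t =
        D / 8 * (1 - Real.cos θ) * K t - ∑ j, δ j / 8 *
          ((Real.cos (2 * π * (lam j * t - α j)) - Real.cos θ) * K t) := by
      intro t
      rw [hDdef, Finset.sum_mul, Finset.sum_div, Finset.sum_mul, Finset.sum_mul,
        ← Finset.sum_sub_distrib]
      refine Finset.sum_congr rfl fun j _ => ?_
      ring
    have i1 : ∀ j, IntervalIntegrable (fun t => δ j / 8 *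
          ((Real.cos (2 * π * (lam j * t - α j)) - Real.cos θ) * K t))
          MeasureTheory.volume T₁ T₂ :=
      fun j => Continuous.intervalIntegrable (by fun_prop) _ _
    have i2 : IntervalIntegrable (fun t => ∑ j, δ j / 8 *
          ((Real.cos (2 * π * (lam j * t - α j)) - Real.cos θ) * K t))
          MeasureTheory.volume T₁ T₂ :=
      Continuous.intervalIntegrable (by fun_prop) _ _
    have i3 : IntervalIntegrable (fun t => D / 8 * (1 - Real.cos θ) * K t)
          MeasureTheory.volume T₁ T₂ :=
      Continuous.intervalIntegrable (by fun_prop) _ _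
    simp only [e]
    rw [intervalIntegral.integral_sub i3 i2, intervalIntegral.integral_finsetSum (fun j _ => i1 j),
      intervalIntegral.integral_const_mul]
    simp only [intervalIntegral.integral_const_mul, hJ]
  have hsum : -(D / 8 * ((1 - Real.cos θ) * X)) ≤ ∑ j, δ j / 8 *
        ∫ t in T₁..T₂, (Real.cos (2 * π * (lam j * t - α j)) - Real.cos θ) * K t := by
    have : -(D / 8 * ((1 - Real.cos θ) * X)) = ∑ j, δ j / 8 * (-((1 - Real.cos θ) * X)) := by
      rw [← Finset.sum_mul, ← Finset.sum_div]; ring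
    rw [this]
    refine Finset.sum_le_sum fun j _ => ?_
    refine mul_le_mul_of_nonneg_left (le_trans ?_ (hK2 j)) (by linarith [hδ j])
    rw [mul_div_assoc]
    have := mul_le_mul_of_nonneg_left hAX (by linarith : 0 ≤ 1 - Real.cos θ)
    linarith
  rw [heq] at hint
  have h1 : (D / 8 * (1 - Real.cos θ) + E) * J < I * J := mul_lt_mul_of_pos_right hcon hJpos
  have h2 : E * J < D / 8 * ((1 - Real.cos θ) * X) := by linarith
  have hE0 : 0 ≤ E := by rw [hE]; exact mul_nonneg (by linarith) hR0
  have h3 := mul_le_mul_of_nonneg_left hJlow hE0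
  have h4 : 0 ≤ D / 4 * R * ((T₂ - T₁) * C ^ n) * ((1 + Real.cos θ) / 2 - R) :=
    mul_nonneg (mul_nonneg (mul_nonneg (by linarith) hR0) (mul_pos hTT hCn).le) (by linarith)
  clear_value J X E I R C A D
  rw [hXR] at h2
  rw [hE] at h2 h3
  nlinarith
end

section
/- Let σ₀ ∈ (1/2, 1) be fixed and let χ_1, …, χ_k be distinct primitive Dirichlet characters. Then there exists a constant c > 0 such that for all sufficiently large T there exist t_1, …, t_k ∈ [T, 2T] with |t_i − t_j| ≤ 2·(log T)^{(1+σ₀)/2}·(log log T)^{1/2} for all i, j ∈ {1, …, k}, and |L(χ_j, σ₀ + i t_j)| ≥ exp(c·(log T)^{1−σ₀}/log log T) for every j = 1, …, k. -/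
open Real Set

open MeasureTheory in
lemma gauss_ft (T : ℝ) (hT : 0 < T) (l : ℝ) :
    ∫ t : ℝ, ((Real.exp (-(t / T) ^ 2) : ℝ) : ℂ) * Complex.exp (-(t * l) * Complex.I) =
      ((T * √π * Real.exp (-(T * l) ^ 2 / 4) : ℝ) : ℂ) := by
  have hb : 0 < (((1 / T ^ 2 : ℝ)) : ℂ).re := by
    rw [Complex.ofReal_re]; positivity
  have h := fourierIntegral_gaussian hb ((-l : ℝ) : ℂ)
  have e1 : (fun t : ℝ => ((Real.exp (-(t / T) ^ 2) : ℝ) : ℂ) * Complex.exp (-(t * l) * Complex.I)) =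
      fun x : ℝ => Complex.exp (Complex.I * ((-l : ℝ) : ℂ) * x) *
        Complex.exp (-((1 / T ^ 2 : ℝ) : ℂ) * x ^ 2) := by
    funext t
    rw [mul_comm, Complex.ofReal_exp]
    congr 2
    · push_cast; ring
    · push_cast; field_simp
  rw [e1, h]
  have e2 : (π : ℂ) / ((1 / T ^ 2 : ℝ) : ℂ) = ((T ^ 2 * π : ℝ) : ℂ) := by
    push_cast; field_simp
  rw [e2]
  have e3 : (((T ^ 2 * π : ℝ) : ℂ)) ^ (1 / 2 : ℂ) = ((T * √π : ℝ) : ℂ) := by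
    rw [show (1 / 2 : ℂ) = ((1 / 2 : ℝ) : ℂ) by push_cast; rfl, ← Complex.ofReal_cpow (by positivity),
      ← Real.sqrt_eq_rpow, Real.sqrt_mul (by positivity), Real.sqrt_sq hT.le]
  rw [e3, Complex.ofReal_mul (T * √π), Complex.ofReal_exp]
  congr 2
  push_cast
  field_simp

open MeasureTheory in
lemma gauss_ms {X : Type*} [MeasurableSpace X] (μ : Measure X) [SFinite μ] (f : X → ℂ)
    (hf : Integrable f μ) (l : X → ℝ) (hl : Measurable l) (T : ℝ) (hT : 0 < T) :
    Integrable (fun t : ℝ => Real.exp (-(t / T) ^ 2) *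
      ‖∫ x, f x * Complex.exp (-(t * l x) * Complex.I) ∂μ‖ ^ 2) ∧
    ∫ t : ℝ, Real.exp (-(t / T) ^ 2) * ‖∫ x, f x * Complex.exp (-(t * l x) * Complex.I) ∂μ‖ ^ 2
      ≤ ∫ p : X × X, ‖f p.1‖ * ‖f p.2‖ * (T * √π * Real.exp (-(T * (l p.1 - l p.2)) ^ 2 / 4))
        ∂(μ.prod μ) := by
  have hG : Integrable (fun t : ℝ => ((Real.exp (-(t / T) ^ 2) : ℝ) : ℂ)) := by
    have := (integrable_exp_neg_mul_sq (b := 1 / T ^ 2) (by positivity)).ofReal (𝕜 := ℂ)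
    refine this.congr (Filter.Eventually.of_forall fun t => ?_)
    simp only
    congr 2
    field_simp
  set F : ℝ → X × X → ℂ := fun t p =>
    ((Real.exp (-(t / T) ^ 2) : ℝ) : ℂ) * (f p.1 * (starRingEnd ℂ) (f p.2)) *
      Complex.exp (-(t * (l p.1 - l p.2)) * Complex.I) with hF
  have hff : Integrable (fun p : X × X => f p.1 * (starRingEnd ℂ) (f p.2)) (μ.prod μ) := by
    have h2 : Integrable (fun x => (starRingEnd ℂ) (f x)) μ :=
      (Complex.conjLIE.toContinuousLinearEquiv.toContinuousLinearMap).integrable_comp hf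
    exact hf.mul_prod h2
  have hint : Integrable (Function.uncurry F) ((volume : Measure ℝ).prod (μ.prod μ)) := by
    have h1 := hG.mul_prod hff
    refine h1.mul_bdd (c := 1) ?_ ?_
    · apply Measurable.aestronglyMeasurable
      fun_prop
    · refine Filter.Eventually.of_forall fun z => ?_
      rw [show (-((z.1 : ℂ) * ((l z.2.1 : ℂ) - (l z.2.2 : ℂ))) * Complex.I) =
        ((-(z.1 * (l z.2.1 - l z.2.2)) : ℝ) : ℂ) * Complex.I by push_cast; ring]
      rw [Complex.norm_exp_ofReal_mul_I]
  have key : ∀ t : ℝ, ((Real.exp (-(t / T) ^ 2) *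
      ‖∫ x, f x * Complex.exp (-(t * l x) * Complex.I) ∂μ‖ ^ 2 : ℝ) : ℂ) =
      ∫ p, F t p ∂(μ.prod μ) := by
    intro t
    have h1 : ∫ p, F t p ∂(μ.prod μ) = ((Real.exp (-(t / T) ^ 2) : ℝ) : ℂ) *
        ∫ p : X × X, (f p.1 * Complex.exp (-(t * l p.1) * Complex.I)) *
          (starRingEnd ℂ) (f p.2 * Complex.exp (-(t * l p.2) * Complex.I)) ∂(μ.prod μ) := by
      rw [← integral_const_mul]
      congr 1
      funext p
      simp only [hF, map_mul, ← Complex.exp_conj, map_neg, Complex.conj_I, Complex.conj_ofReal]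
      rw [show (-(t * ((l p.1 : ℂ) - l p.2)) * Complex.I) = -(t * l p.1) * Complex.I +
        -(t * l p.2) * -Complex.I by ring, Complex.exp_add]
      ring
    rw [h1, integral_prod_mul (fun x => f x * Complex.exp (-(t * l x) * Complex.I))
      (fun x => (starRingEnd ℂ) (f x * Complex.exp (-(t * l x) * Complex.I))), integral_conj,
      Complex.mul_conj, Complex.normSq_eq_norm_sq]
    push_cast
    ring
  have hI1 : Integrable (fun t : ℝ => ((Real.exp (-(t / T) ^ 2) *
      ‖∫ x, f x * Complex.exp (-(t * l x) * Complex.I) ∂μ‖ ^ 2 : ℝ) : ℂ)) := by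
    simp_rw [key]
    exact hint.integral_prod_left
  refine ⟨hI1.re, ?_⟩
  have h2 : ((∫ t : ℝ, Real.exp (-(t / T) ^ 2) *
      ‖∫ x, f x * Complex.exp (-(t * l x) * Complex.I) ∂μ‖ ^ 2 : ℝ) : ℂ) =
      ∫ p : X × X, (f p.1 * (starRingEnd ℂ) (f p.2)) *
        ((T * √π * Real.exp (-(T * (l p.1 - l p.2)) ^ 2 / 4) : ℝ) : ℂ) ∂(μ.prod μ) := by
    rw [← integral_complex_ofReal]
    simp_rw [key]
    rw [integral_integral_swap hint]
    congr 1
    funext p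
    rw [← gauss_ft T hT, ← integral_const_mul]
    congr 1
    funext t
    simp only [hF]
    push_cast
    ring
  have h3 : (∫ t : ℝ, Real.exp (-(t / T) ^ 2) *
      ‖∫ x, f x * Complex.exp (-(t * l x) * Complex.I) ∂μ‖ ^ 2) ≤
      ‖((∫ t : ℝ, Real.exp (-(t / T) ^ 2) *
      ‖∫ x, f x * Complex.exp (-(t * l x) * Complex.I) ∂μ‖ ^ 2 : ℝ) : ℂ)‖ := by
    rw [Complex.norm_real]; exact Real.le_norm_self _
  refine h3.trans ?_
  rw [h2]
  refine (norm_integral_le_integral_norm _).trans (le_of_eq ?_)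
  congr 1
  funext p
  rw [norm_mul, norm_mul, Complex.norm_real, RCLike.norm_conj, Real.norm_of_nonneg (by positivity)]

lemma summable_exp_sq : Summable (fun k : ℤ => Real.exp (-(k : ℝ) ^ 2 / 4)) := by
  have h : Summable (fun k : ℤ => 4 * (1 / (k : ℝ) ^ 2)) :=
    (Real.summable_one_div_int_pow (p := 2)).mpr (by norm_num) |>.mul_left 4
  refine Summable.of_norm_bounded_eventually h ?_
  refine (Set.finite_singleton (0 : ℤ)).eventually_cofinite_notMem.mono ?_
  intro k hk
  have hk0 : (k : ℝ) ≠ 0 := by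
    simpa using hk
  have hk2 : 0 < (k : ℝ) ^ 2 := by positivity
  rw [Real.norm_of_nonneg (Real.exp_nonneg _), neg_div, Real.exp_neg, ← one_div, ← mul_div_assoc,
    mul_one, div_le_div_iff₀ (Real.exp_pos _) hk2]
  have := Real.add_one_le_exp ((k : ℝ) ^ 2 / 4)
  linarith

lemma log_sep (a b : ℕ) (T : ℝ) (ha : 1 ≤ a) (hb : 1 ≤ b) (haT : (a : ℝ) ≤ T) (hbT : (b : ℝ) ≤ T) :
    |(a : ℝ) - b| ≤ T * |Real.log a - Real.log b| := by
  wlog h : a ≤ b generalizing a b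
  · rw [abs_sub_comm, abs_sub_comm (Real.log a)]
    exact this b a hb ha hbT haT (le_of_not_ge h)
  have ha' : (0 : ℝ) < a := by exact_mod_cast ha
  have hb' : (0 : ℝ) < b := by exact_mod_cast hb
  have hab : (a : ℝ) ≤ b := by exact_mod_cast h
  have hl : Real.log a ≤ Real.log b := Real.log_le_log ha' hab
  rw [abs_sub_comm, abs_sub_comm (Real.log a), abs_of_nonneg (by linarith),
    abs_of_nonneg (by linarith), ← Real.log_div hb'.ne' ha'.ne']
  have h1 := Real.one_sub_inv_le_log_of_pos (x := (b : ℝ) / a) (by positivity)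
  rw [inv_div] at h1
  have h2 : (b : ℝ) - a ≤ b * Real.log (b / a) := by
    have : (b : ℝ) * (1 - a / b) = b - a := by field_simp
    rw [← this]; gcongr
  refine h2.trans ?_
  have : 0 ≤ Real.log ((b : ℝ) / a) := Real.log_nonneg (by rw [le_div_iff₀ ha']; linarith)
  gcongr

/-- Schur test for finite sums. -/
lemma schur_fin {ι : Type*} [Fintype ι] (a : ι → ℝ) (k : ι → ι → ℝ) (K : ℝ)
    (hk : ∀ i j, 0 ≤ k i j) (hs : ∀ i j, k i j = k j i) (hK : ∀ i, ∑ j, k i j ≤ K) :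
    ∑ i, ∑ j, a i * a j * k i j ≤ K * ∑ i, a i ^ 2 := by
  have h1 : ∀ i j, a i * a j * k i j ≤ (a i ^ 2 * k i j + a j ^ 2 * k i j) / 2 := by
    intro i j
    nlinarith [mul_nonneg (sq_nonneg (a i - a j)) (hk i j)]
  have h2 : ∑ i, ∑ j, a j ^ 2 * k i j = ∑ i, ∑ j, a i ^ 2 * k i j := by
    rw [Finset.sum_comm]
    refine Finset.sum_congr rfl fun i _ => Finset.sum_congr rfl fun j _ => ?_
    rw [hs]
  calc ∑ i, ∑ j, a i * a j * k i j ≤ ∑ i, ∑ j, (a i ^ 2 * k i j + a j ^ 2 * k i j) / 2 :=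
        Finset.sum_le_sum fun i _ => Finset.sum_le_sum fun j _ => h1 i j
    _ = ∑ i, ∑ j, a i ^ 2 * k i j := by
        simp_rw [← Finset.sum_div, Finset.sum_add_distrib]
        rw [h2]; ring
    _ = ∑ i, a i ^ 2 * ∑ j, k i j := by simp_rw [Finset.mul_sum]
    _ ≤ ∑ i, a i ^ 2 * K := Finset.sum_le_sum fun i _ =>
        mul_le_mul_of_nonneg_left (hK i) (sq_nonneg _)
    _ = K * ∑ i, a i ^ 2 := by rw [← Finset.sum_mul, mul_comm]

open MeasureTheory in
lemma gauss_weight (T : ℝ) (hT : 0 < T) (J : Set ℝ) (hJm : MeasurableSet J)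
    (hJ : J ⊆ Set.Icc T (2 * T)) (h : ℝ → ℝ) (h0 : ∀ t, 0 ≤ h t) (hc : Continuous h)
    (hi : Integrable (fun t : ℝ => Real.exp (-(t / T) ^ 2) * h t)) :
    ∫ t in J, h t ≤ Real.exp 4 * ∫ t : ℝ, Real.exp (-(t / T) ^ 2) * h t := by
  have hcomp : IntegrableOn h (Set.Icc T (2 * T)) := hc.continuousOn.integrableOn_Icc
  calc ∫ t in J, h t ≤ ∫ t in J, Real.exp 4 * (Real.exp (-(t / T) ^ 2) * h t) := by
        refine setIntegral_mono_on (hcomp.mono_set hJ) (hi.const_mul _).integrableOn hJm ?_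
        intro t ht
        have h1 := hJ ht
        rw [← mul_assoc, ← Real.exp_add]
        refine le_mul_of_one_le_left (h0 t) (Real.one_le_exp ?_)
        have h2 : t / T ≤ 2 := by rw [div_le_iff₀ hT]; exact h1.2
        have h3 : 0 ≤ t / T := div_nonneg (hT.le.trans h1.1) hT.le
        nlinarith
    _ ≤ ∫ t : ℝ, Real.exp 4 * (Real.exp (-(t / T) ^ 2) * h t) := by
        refine setIntegral_le_integral (hi.const_mul _) ?_
        exact Filter.Eventually.of_forall fun t =>
          mul_nonneg (Real.exp_nonneg _) (mul_nonneg (Real.exp_nonneg _) (h0 t))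
    _ = _ := integral_const_mul _ _

open MeasureTheory in
lemma mean_value : ∃ K : ℝ, 0 < K ∧ ∀ {ι : Type} [Fintype ι] (g : ι → ℕ) (c : ι → ℂ) (T : ℝ)
    (J : Set ℝ), 0 < T → Function.Injective g → (∀ i, 1 ≤ g i) → (∀ i, (g i : ℝ) ≤ T) →
    MeasurableSet J → J ⊆ Set.Icc T (2 * T) →
    ∫ t in J, ‖∑ i, c i * Complex.exp (-((t : ℂ) * (Real.log (g i) : ℝ)) * Complex.I)‖ ^ 2 ≤
      K * T * ∑ i, ‖c i‖ ^ 2 := by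
  have hpos : 0 < ∑' k : ℤ, Real.exp (-(k : ℝ) ^ 2 / 4) :=
    summable_exp_sq.tsum_pos (fun _ => (Real.exp_nonneg _)) 0 (Real.exp_pos _)
  refine ⟨Real.exp 4 * (√π * ∑' k : ℤ, Real.exp (-(k : ℝ) ^ 2 / 4)), by positivity, ?_⟩
  intro ι _ g c T J hT hg h1 hgT hJm hJ
  letI : MeasurableSpace ι := ⊤
  have hms := gauss_ms (Measure.count : Measure ι) c (Integrable.of_finite) (fun i => Real.log (g i))
    (measurable_from_top) T hT
  simp only [integral_count] at hms
  have hw := gauss_weight T hT J hJm hJ _ (fun t => sq_nonneg _) ?_ hms.1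
  swap
  · fun_prop
  refine hw.trans ?_
  rw [mul_assoc, mul_assoc]
  refine mul_le_mul_of_nonneg_left (hms.2.trans ?_) (Real.exp_nonneg _)
  rw [integral_prod _ Integrable.of_finite]
  simp only [integral_count]
  have := schur_fin (fun i => ‖c i‖)
    (fun i j => T * √π * Real.exp (-(T * (Real.log (g i) - Real.log (g j))) ^ 2 / 4))
    (T * √π * ∑' k : ℤ, Real.exp (-(k : ℝ) ^ 2 / 4)) (fun i j => by positivity)
    (fun i j => by congr 3; ring) ?_
  · refine this.trans (le_of_eq ?_); ring
  intro i
  rw [← Finset.mul_sum]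
  refine mul_le_mul_of_nonneg_left ?_ (by positivity)
  have hinj : Function.Injective (fun j : ι => (g i : ℤ) - (g j : ℤ)) := by
    intro a b hab
    apply hg
    simp only at hab
    omega
  calc ∑ j, Real.exp (-(T * (Real.log (g i) - Real.log (g j))) ^ 2 / 4)
      ≤ ∑ j, Real.exp (-(((g i : ℤ) - (g j : ℤ) : ℤ) : ℝ) ^ 2 / 4) := by
        refine Finset.sum_le_sum fun j _ => Real.exp_le_exp.mpr ?_
        have := log_sep (g i) (g j) T (h1 i) (h1 j) (hgT i) (hgT j)
        have h2 : |(g i : ℝ) - g j| ≤ |T * (Real.log (g i) - Real.log (g j))| := by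
          rwa [abs_mul, abs_of_pos hT]
        have h3 := sq_le_sq.mpr h2
        push_cast
        linarith
    _ ≤ ∑' k : ℤ, Real.exp (-(k : ℝ) ^ 2 / 4) := by
        rw [← tsum_fintype (L := SummationFilter.unconditional _)]
        exact (summable_exp_sq.comp_injective hinj).tsum_le_tsum_of_inj (fun j : ι => (g i : ℤ) - (g j : ℤ)) hinj
          (fun _ _ => Real.exp_nonneg _) (fun _ => le_rfl) summable_exp_sq

open MeasureTheory in
lemma planch (f : ℝ → ℂ) (hf : Integrable f) (hf2 : Integrable (fun v => ‖f v‖ ^ 2)) (T : ℝ)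
    (hT : 0 < T) (J : Set ℝ) (hJm : MeasurableSet J) (hJ : J ⊆ Set.Icc T (2 * T)) :
    ∫ t in J, ‖∫ v, f v * Complex.exp (-((t : ℂ) * (v : ℝ)) * Complex.I)‖ ^ 2 ≤
      Real.exp 4 * (2 * π) * ∫ v, ‖f v‖ ^ 2 := by
  have hms := gauss_ms volume f hf id measurable_id T hT
  simp only [id] at hms
  have hw := gauss_weight T hT J hJm hJ _ (fun t => sq_nonneg _) ?_ hms.1
  swap
  · refine (continuous_norm.comp ?_).pow 2
    refine continuous_of_dominated (F := fun (t : ℝ) (v : ℝ) => f v * Complex.exp (-((t : ℂ) * (v : ℝ)) * Complex.I)) (bound := fun v => ‖f v‖) ?_ ?_ hf.norm ?_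
    · intro t
      exact hf.aestronglyMeasurable.mul (by fun_prop)
    · intro t
      refine Filter.Eventually.of_forall fun v => ?_
      rw [norm_mul, show (-((t : ℂ) * ((v : ℝ) : ℂ)) * Complex.I) =
        ((-(t * v) : ℝ) : ℂ) * Complex.I by push_cast; ring, Complex.norm_exp_ofReal_mul_I, mul_one]
    · exact Filter.Eventually.of_forall fun v => by fun_prop
  refine hw.trans ?_
  rw [mul_assoc]
  refine mul_le_mul_of_nonneg_left (hms.2.trans ?_) (Real.exp_nonneg _)
  set k : ℝ → ℝ := fun w => T * √π * Real.exp (-(T * w) ^ 2 / 4) with hk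
  have hkq : k = fun w => T * √π * Real.exp (-(T ^ 2 / 4) * w ^ 2) := by
    funext w; simp only [hk]; congr 2; ring
  have hki : Integrable k := by
    rw [hkq]; exact (integrable_exp_neg_mul_sq (by positivity)).const_mul _
  have hkint : ∫ w, k w = 2 * π := by
    rw [hkq, integral_const_mul, integral_gaussian, Real.sqrt_div (by positivity),
      show T ^ 2 / 4 = (T / 2) ^ 2 by ring, Real.sqrt_sq (by positivity)]
    have : √π * √π = π := Real.mul_self_sqrt Real.pi_pos.le
    field_simp
    nlinarith
  have hc1 : Integrable (fun p : ℝ × ℝ => ‖f p.2‖ ^ 2 * k (p.1 - p.2)) (volume.prod volume) := by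
    have := hf2.convolution_integrand (ContinuousLinearMap.mul ℝ ℝ) hki
    simpa using this
  have hksymm : ∀ a b, k (a - b) = k (b - a) := by
    intro a b; simp only [hk]; congr 3; ring
  have hc2 : Integrable (fun p : ℝ × ℝ => ‖f p.1‖ ^ 2 * k (p.1 - p.2)) (volume.prod volume) := by
    have := hc1.swap
    refine this.congr (Filter.Eventually.of_forall fun p => ?_)
    simp [Function.comp, hksymm p.1 p.2]
  have hval2 : ∫ p : ℝ × ℝ, ‖f p.1‖ ^ 2 * k (p.1 - p.2) ∂(volume.prod volume) =
      2 * π * ∫ v, ‖f v‖ ^ 2 := by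
    rw [integral_prod _ hc2]
    simp_rw [integral_const_mul, integral_sub_left_eq_self k]
    rw [hkint, integral_mul_const, mul_comm]
  have hval1 : ∫ p : ℝ × ℝ, ‖f p.2‖ ^ 2 * k (p.1 - p.2) ∂(volume.prod volume) =
      2 * π * ∫ v, ‖f v‖ ^ 2 := by
    rw [← hval2, ← integral_prod_swap]
    simp [hksymm]
  have hle : ∫ p : ℝ × ℝ, ‖f p.1‖ * ‖f p.2‖ * k (p.1 - p.2) ∂(volume.prod volume) ≤
      ∫ p : ℝ × ℝ, (‖f p.1‖ ^ 2 * k (p.1 - p.2) + ‖f p.2‖ ^ 2 * k (p.1 - p.2)) / 2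
        ∂(volume.prod volume) := by
    refine integral_mono_of_nonneg (Filter.Eventually.of_forall fun p => ?_)
      ((hc2.add hc1).div_const 2) (Filter.Eventually.of_forall fun p => ?_)
    · simp only [hk, Pi.zero_apply]; positivity
    · have : 0 ≤ k (p.1 - p.2) := by simp only [hk]; positivity
      simp only
      nlinarith [mul_nonneg (sq_nonneg (‖f p.1‖ - ‖f p.2‖)) this]
  refine hle.trans (le_of_eq ?_)
  rw [integral_div, integral_add hc2 hc1, hval1, hval2]
  ring

lemma sum_period {M : ℕ} [NeZero M] (F : ZMod M → ℂ) (b : ℕ) :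
    ∑ k ∈ Finset.range M, F ((b + k : ℕ) : ZMod M) = ∑ a, F a := by
  have h1 : ∑ k ∈ Finset.range M, F ((b + k : ℕ) : ZMod M) = ∑ a : ZMod M, F (b + a) := by
    refine Finset.sum_nbij' (fun k => (k : ZMod M)) (fun a => a.val) ?_ ?_ ?_ ?_ ?_
    · intro k _; exact Finset.mem_univ _
    · intro a _; exact Finset.mem_range.mpr (ZMod.val_lt a)
    · intro k hk; exact ZMod.val_cast_of_lt (Finset.mem_range.mp hk)
    · intro a _; exact ZMod.natCast_zmod_val a
    · intro k _; push_cast; rfl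
  rw [h1]
  exact Equiv.sum_comp (Equiv.addLeft (b : ZMod M)) F

lemma sum_periodic_bound {M : ℕ} [NeZero M] (F : ZMod M → ℂ) (hF : ∀ a, ‖F a‖ ≤ 1) (n : ℕ) :
    ∀ b : ℕ, ‖∑ k ∈ Finset.range n, F ((b + k : ℕ) : ZMod M) - (∑ a, F a) / M * n‖ ≤ 2 * M := by
  have hM : (0 : ℝ) < M := by exact_mod_cast NeZero.pos M
  have hMc : (M : ℂ) ≠ 0 := by exact_mod_cast NeZero.ne M
  have hc : ‖(∑ a, F a) / (M : ℂ)‖ ≤ 1 := by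
    rw [norm_div, Complex.norm_natCast, div_le_one hM]
    refine (norm_sum_le _ _).trans ?_
    refine (Finset.sum_le_sum fun a _ => hF a).trans ?_
    simp [ZMod.card]
  induction n using Nat.strong_induction_on with
  | _ n ih =>
    intro b
    by_cases h : n < M
    · have hn : (n : ℝ) ≤ M := by exact_mod_cast h.le
      refine (norm_sub_le _ _).trans ?_
      have h1 : ‖∑ k ∈ Finset.range n, F ((b + k : ℕ) : ZMod M)‖ ≤ n := by
        refine (norm_sum_le _ _).trans ?_
        refine (Finset.sum_le_sum fun a _ => hF _).trans ?_
        simp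
      have h2 : ‖(∑ a, F a) / (M : ℂ) * n‖ ≤ n := by
        rw [norm_mul, Complex.norm_natCast]
        exact mul_le_of_le_one_left (by positivity) hc
      linarith
    · obtain ⟨m, rfl⟩ := Nat.exists_eq_add_of_le (not_lt.mp h)
      have := ih m (by have := NeZero.pos M; omega) (b + M)
      rw [Finset.sum_range_add, sum_period]
      convert this using 2
      simp_rw [← add_assoc]
      push_cast
      field_simp
      ring

lemma quad_convex : Convex ℝ {s : ℂ | 0 < s.re ∧ 0 < s.im} :=
  (convex_halfSpace_re_gt 0).inter (convex_halfSpace_im_gt 0)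

open MeasureTheory in
lemma approx_formula {M : ℕ} [NeZero M] (ψ : DirichletCharacter ℂ M) (n0 : ℕ) (hn0 : 1 ≤ n0) :
    ∃ A : ℝ → ℂ, Measurable A ∧ (∀ u, ‖A u‖ ≤ 3 * M) ∧ (∀ u ≤ (n0 : ℝ), A u = 0) ∧
    ∃ c : ℂ, ‖c‖ ≤ 1 ∧ ∀ s : ℂ, 0 < s.re → 0 < s.im →
      ψ.LFunction s = ∑ n ∈ Finset.Icc 1 n0, ψ n * (n : ℂ) ^ (-s) +
        c * (n0 : ℂ) ^ (1 - s) / (s - 1) + s * ∫ u in Set.Ioi (0 : ℝ), (u : ℂ) ^ (-s - 1) * A u := by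
  have hM : (1 : ℝ) ≤ M := by exact_mod_cast NeZero.pos M
  have hn0' : (1 : ℝ) ≤ n0 := by exact_mod_cast hn0
  set c : ℂ := (∑ a, ψ a) / M with hcdef
  have hc : ‖c‖ ≤ 1 := by
    rw [hcdef, norm_div, Complex.norm_natCast, div_le_one (by linarith)]
    refine (norm_sum_le _ _).trans ?_
    refine (Finset.sum_le_sum fun a _ => ψ.norm_le_one a).trans ?_
    simp [ZMod.card]
  set f : ℕ → ℂ := fun k => if k ≤ n0 then 0 else ψ k with hf
  set S : ℝ → ℂ := fun u => ∑ k ∈ Finset.Icc 1 ⌊u⌋₊, f k with hS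
  set A : ℝ → ℂ := fun u => if u ≤ n0 then 0 else S u - c * (u - n0) with hA
  have hSval : ∀ u : ℝ, (n0 : ℝ) ≤ u → S u =
      ∑ k ∈ Finset.range (⌊u⌋₊ - n0), ψ ((n0 + 1 + k : ℕ) : ZMod M) := by
    intro u hu
    have h1 : n0 ≤ ⌊u⌋₊ := Nat.le_floor hu
    simp only [hS, hf]
    rw [← Finset.sum_subset (s₁ := Finset.Ioc n0 ⌊u⌋₊)]
    · have hIoc : Finset.Ioc n0 ⌊u⌋₊ = Finset.Ico (n0 + 1) (⌊u⌋₊ + 1) := by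
        ext k; simp only [Finset.mem_Ioc, Finset.mem_Ico]; omega
      rw [hIoc, Finset.sum_Ico_eq_sum_range]
      refine Finset.sum_congr (by congr 1; omega) fun k _ => ?_
      rw [if_neg (by omega)]
    · intro k hk; simp only [Finset.mem_Ioc, Finset.mem_Icc] at *; omega
    · intro k hk hk'
      simp only [Finset.mem_Ioc, Finset.mem_Icc] at *
      rw [if_pos]; by_contra; omega
  have hS0 : ∀ u : ℝ, u ≤ n0 → S u = 0 := by
    intro u hu
    refine Finset.sum_eq_zero fun k hk => ?_
    simp only [hf]
    rw [if_pos]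
    have h1 : ⌊u⌋₊ ≤ n0 := Nat.floor_le_of_le hu
    have := (Finset.mem_Icc.mp hk).2
    omega
  have hSm : Measurable S := by
    have : S = (fun n : ℕ => ∑ k ∈ Finset.Icc 1 n, f k) ∘ (fun u : ℝ => ⌊u⌋₊) := rfl
    rw [this]
    exact (measurable_from_top).comp Nat.measurable_floor
  have hAm : Measurable A := by
    refine Measurable.ite measurableSet_Iic measurable_const ?_
    exact hSm.sub (by fun_prop)
  have hAb : ∀ u, ‖A u‖ ≤ 3 * M := by
    intro u
    by_cases hu : u ≤ n0
    · simp only [hA, if_pos hu, norm_zero]; positivity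
    · have hu' : (n0 : ℝ) ≤ u := (not_le.mp hu).le
      simp only [hA, if_neg hu]
      rw [hSval u hu']
      have h1 := sum_periodic_bound (fun a => ψ a) (fun a => ψ.norm_le_one a) (⌊u⌋₊ - n0) (n0 + 1)
      have h2 : n0 ≤ ⌊u⌋₊ := Nat.le_floor hu'
      rw [Nat.cast_sub h2] at h1
      have h3 : ‖c * ((u : ℂ) - (⌊u⌋₊ : ℂ))‖ ≤ 1 := by
        have h4 := Nat.floor_le (a := u) (by linarith)
        have h5 := Nat.lt_floor_add_one u
        have h6 : ‖(u : ℂ) - (⌊u⌋₊ : ℂ)‖ ≤ 1 := by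
          rw [show (u : ℂ) - (⌊u⌋₊ : ℂ) = ((u - ⌊u⌋₊ : ℝ) : ℂ) by push_cast; rfl, Complex.norm_real,
            Real.norm_of_nonneg (by linarith)]
          linarith
        rw [norm_mul]
        exact mul_le_one₀ hc (norm_nonneg _) h6
      calc _ = ‖(∑ k ∈ Finset.range (⌊u⌋₊ - n0), ψ ((n0 + 1 + k : ℕ) : ZMod M) -
            c * ((⌊u⌋₊ : ℂ) - n0)) - c * ((u : ℂ) - (⌊u⌋₊ : ℂ))‖ := by congr 1; ring
        _ ≤ 2 * M + 1 := (norm_sub_le _ _).trans (add_le_add h1 h3)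
        _ ≤ 3 * M := by linarith
  have hA0 : ∀ u ≤ (n0 : ℝ), A u = 0 := fun u hu => by simp only [hA, if_pos hu]
  refine ⟨A, hAm, hAb, hA0, c, hc, ?_⟩
  set U : Set ℂ := {s : ℂ | 0 < s.re ∧ 0 < s.im} with hU
  have hUo : IsOpen U :=
    (isOpen_lt continuous_const Complex.continuous_re).inter
      (isOpen_lt continuous_const Complex.continuous_im)
  have hne1 : ∀ s ∈ U, s ≠ 1 := by
    rintro s ⟨_, h2⟩ rfl; simp at h2
  set G : ℂ → ℂ := fun s => ∑ n ∈ Finset.Icc 1 n0, ψ n * (n : ℂ) ^ (-s) +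
        c * (n0 : ℂ) ^ (1 - s) / (s - 1) + s * ∫ u in Set.Ioi (0 : ℝ), (u : ℂ) ^ (-s - 1) * A u
    with hG
  suffices h : Set.EqOn ψ.LFunction G U from fun s h1 h2 => h ⟨h1, h2⟩
  have hL : AnalyticOnNhd ℂ ψ.LFunction U :=
    DifferentiableOn.analyticOnNhd (fun s hs =>
      (DirichletCharacter.differentiableAt_LFunction ψ s (.inl (hne1 s hs))).differentiableWithinAt) hUo
  have hGd : AnalyticOnNhd ℂ G U := by
    refine DifferentiableOn.analyticOnNhd (fun s hs => DifferentiableAt.differentiableWithinAt ?_) hUo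
    have hmel : DifferentiableAt ℂ (fun s => mellin A (-s)) s := by
      have h1 : DifferentiableAt ℂ (mellin A) (-s) := by
        refine mellin_differentiableAt_of_isBigO_rpow (a := 0) (b := -s.re - 1) ?_ ?_ ?_ ?_ ?_
        · refine LocallyIntegrable.locallyIntegrableOn ?_ _
          refine (locallyIntegrable_const (3 * (M : ℝ))).mono hAm.aestronglyMeasurable ?_
          refine Filter.Eventually.of_forall fun u => ?_
          exact (hAb u).trans (Real.le_norm_self _)
        · refine Asymptotics.IsBigO.of_bound (3 * M) (Filter.Eventually.of_forall fun u => ?_)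
          simpa using hAb u
        · simpa using hs.1
        · refine Asymptotics.IsBigO.of_bound 1 ?_
          filter_upwards [nhdsWithin_le_nhds (Iio_mem_nhds (show (0 : ℝ) < 1 by norm_num))] with u hu
          rw [hA0 u ((le_of_lt hu).trans hn0')]
          simp only [norm_zero]; positivity
        · simp
      exact h1.comp s (differentiableAt_id.neg)
    have hmel' : (fun s => mellin A (-s)) = fun s : ℂ =>
        ∫ u in Set.Ioi (0 : ℝ), (u : ℂ) ^ (-s - 1) * A u := by
      funext s; simp [mellin]
    rw [hmel'] at hmel
    have hs1 : s - 1 ≠ 0 := sub_ne_zero.mpr (hne1 s hs)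
    have hn0c : (n0 : ℂ) ≠ 0 := by exact_mod_cast (by omega : n0 ≠ 0)
    refine DifferentiableAt.add (DifferentiableAt.add ?_ ?_) (differentiableAt_id.mul hmel)
    · refine DifferentiableAt.fun_sum fun n hn => ?_
      have : (n : ℂ) ≠ 0 := by
        have := (Finset.mem_Icc.mp hn).1
        exact_mod_cast (by omega : n ≠ 0)
      exact (DifferentiableAt.const_cpow (differentiableAt_id.neg) (.inl this)).const_mul _
    · refine DifferentiableAt.div ?_ (differentiableAt_id.sub_const 1) hs1
      exact (DifferentiableAt.const_cpow (differentiableAt_id.const_sub 1) (.inl hn0c)).const_mul _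
  have hz : (2 + Complex.I) ∈ U := by simp [hU]
  refine hL.eqOn_of_preconnected_of_eventuallyEq hGd quad_convex.isPreconnected hz ?_
  have hev : ∀ᶠ s : ℂ in nhds (2 + Complex.I), 1 < s.re :=
    (isOpen_lt continuous_const Complex.continuous_re).mem_nhds (by simp)
  filter_upwards [hev] with s hs
  rw [DirichletCharacter.LFunction_eq_LSeries ψ hs]
  have hs0 : s ≠ 0 := by rintro rfl; simp at hs; linarith
  have hs1 : s - 1 ≠ 0 := by
    intro h; rw [sub_eq_zero] at h; rw [h] at hs; simp at hs
  set g : ℕ → ℂ := fun k => if k ≤ n0 then ψ k else 0 with hg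
  have hfn : ∀ k, ‖f k‖ ≤ 1 := by
    intro k; simp only [hf]; split_ifs
    · simp
    · exact ψ.norm_le_one _
  have hgn : ∀ k, ‖g k‖ ≤ 1 := by
    intro k; simp only [hg]; split_ifs
    · exact ψ.norm_le_one _
    · simp
  have hfs : LSeriesSummable f s := LSeriesSummable_of_bounded_of_one_lt_re (m := 1) (fun n _ => hfn n) hs
  have hgs : LSeriesSummable g s := LSeriesSummable_of_bounded_of_one_lt_re (m := 1) (fun n _ => hgn n) hs
  have hadd : LSeries (fun n => ψ n) s = LSeries g s + LSeries f s := by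
    rw [← LSeries_add hgs hfs]
    congr 1
    funext k
    simp only [hg, hf, Pi.add_apply]
    split_ifs <;> simp
  have hgval : LSeries g s = ∑ n ∈ Finset.Icc 1 n0, ψ n * (n : ℂ) ^ (-s) := by
    rw [LSeries, tsum_eq_sum (s := Finset.Icc 1 n0)]
    · refine Finset.sum_congr rfl fun n hn => ?_
      have hn' := Finset.mem_Icc.mp hn
      rw [LSeries.term_of_ne_zero (by omega), Complex.cpow_neg, div_eq_mul_inv]
      simp only [hg, if_pos hn'.2]
    · intro n hn
      rw [LSeries.term_def]
      split_ifs with h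
      · rfl
      · simp only [hg]
        rw [if_neg, zero_div]
        intro h2; exact hn (Finset.mem_Icc.mpr ⟨by omega, h2⟩)
  have hfval : LSeries f s = c * (n0 : ℂ) ^ (1 - s) / (s - 1) +
      s * ∫ u in Set.Ioi (0 : ℝ), (u : ℂ) ^ (-s - 1) * A u := by
    rw [LSeries_eq_mul_integral' f zero_le_one hs]
    swap
    · refine Asymptotics.IsBigO.of_bound 1 (Filter.Eventually.of_forall fun n => ?_)
      have h1 : ∑ k ∈ Finset.Icc 1 n, ‖f k‖ ≤ n := by
        refine (Finset.sum_le_sum fun k _ => hfn k).trans ?_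
        simp
      rw [Real.norm_of_nonneg (Finset.sum_nonneg fun _ _ => norm_nonneg _)]
      simpa using h1
    have hz1 : ∫ t in Set.Ioi (1 : ℝ), (∑ k ∈ Finset.Icc 1 ⌊t⌋₊, f k) * (t : ℂ) ^ (-(s + 1)) =
        ∫ t in Set.Ioi (n0 : ℝ), S t * (t : ℂ) ^ (-(s + 1)) := by
      change ∫ t in Set.Ioi (1 : ℝ), S t * (t : ℂ) ^ (-(s + 1)) = _
      refine setIntegral_eq_of_subset_of_forall_sdiff_eq_zero measurableSet_Ioi
        (Set.Ioi_subset_Ioi hn0') ?_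
      intro t ht
      have : t ≤ n0 := not_lt.mp ht.2
      rw [hS0 t this, zero_mul]
    have hz2 : ∫ u in Set.Ioi (0 : ℝ), (u : ℂ) ^ (-s - 1) * A u =
        ∫ u in Set.Ioi (n0 : ℝ), (u : ℂ) ^ (-s - 1) * A u := by
      refine setIntegral_eq_of_subset_of_forall_sdiff_eq_zero measurableSet_Ioi
        (Set.Ioi_subset_Ioi (by linarith)) ?_
      intro t ht
      have : t ≤ n0 := not_lt.mp ht.2
      rw [hA0 t this, mul_zero]
    rw [hz1, hz2]
    have hn0p : (0 : ℝ) < n0 := by linarith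
    have i1 : IntegrableOn (fun u : ℝ => (u : ℂ) ^ (-s)) (Set.Ioi (n0 : ℝ)) :=
      integrableOn_Ioi_cpow_of_lt (by simpa using hs) hn0p
    have i2 : IntegrableOn (fun u : ℝ => (u : ℂ) ^ (-s - 1)) (Set.Ioi (n0 : ℝ)) :=
      integrableOn_Ioi_cpow_of_lt (by simp; linarith) hn0p
    have i3 : IntegrableOn (fun u : ℝ => (u : ℂ) ^ (-s - 1) * A u) (Set.Ioi (n0 : ℝ)) :=
      i2.mul_bdd (c := 3 * M) hAm.aestronglyMeasurable (Filter.Eventually.of_forall hAb)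
    have e1 : ∫ t in Set.Ioi (n0 : ℝ), S t * (t : ℂ) ^ (-(s + 1)) =
        ∫ t in Set.Ioi (n0 : ℝ), ((t : ℂ) ^ (-s - 1) * A t + (c * (t : ℂ) ^ (-s) -
          c * n0 * (t : ℂ) ^ (-s - 1))) := by
      refine setIntegral_congr_fun measurableSet_Ioi fun t ht => ?_
      have ht0 : (0 : ℝ) < t := hn0p.trans ht
      have htc : (t : ℂ) ≠ 0 := by exact_mod_cast ht0.ne'
      simp only [hA]
      rw [if_neg (not_le.mpr ht)]
      have h1 : (t : ℂ) ^ (-s) = (t : ℂ) ^ (-s - 1) * t := by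
        conv_lhs => rw [show -s = (-s - 1) + 1 by ring, Complex.cpow_add _ _ htc, Complex.cpow_one]
      rw [h1, show -(s + 1) = -s - 1 by ring]
      ring
    have e2 : ∫ t in Set.Ioi (n0 : ℝ), (c * (t : ℂ) ^ (-s) - c * n0 * (t : ℂ) ^ (-s - 1)) =
        c * (n0 : ℂ) ^ (1 - s) / (s - 1) / s := by
      rw [integral_sub (i1.const_mul c) (i2.const_mul _), integral_const_mul, integral_const_mul,
        integral_Ioi_cpow_of_lt (by simpa using hs) hn0p,
        integral_Ioi_cpow_of_lt (by simp; linarith) hn0p]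
      have hn0c : (n0 : ℂ) ≠ 0 := by exact_mod_cast (by omega : n0 ≠ 0)
      have h1 : (n0 : ℂ) ^ (1 - s) = (n0 : ℂ) ^ (-s) * n0 := by
        rw [show 1 - s = -s + 1 by ring, Complex.cpow_add _ _ hn0c, Complex.cpow_one]
      rw [show -s + 1 = 1 - s by ring, show -s - 1 + 1 = -s by ring]
      simp only [Complex.ofReal_natCast]
      rw [h1]
      have : 1 - s ≠ 0 := by rw [← neg_sub]; exact neg_ne_zero.mpr hs1
      rw [show (1 - s) = -(s - 1) by ring]
      field_simp
      ring
    have i4 : IntegrableOn (fun t : ℝ => c * (t : ℂ) ^ (-s) - c * n0 * (t : ℂ) ^ (-s - 1))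
        (Set.Ioi (n0 : ℝ)) := (i1.const_mul c).sub (i2.const_mul _)
    rw [e1, integral_add i3 i4, e2, mul_add]
    rw [mul_div_cancel₀ _ hs0, add_comm]
  rw [hadd, hgval, hfval, hG]
  ring

lemma error_ms {M : ℕ} [NeZero M] (ψ : DirichletCharacter ℂ M) (n0 : ℕ) (hn0 : 1 ≤ n0)
    (σ : ℝ) (hσ1 : 1/2 < σ) (hσ2 : σ < 1) (T : ℝ) (hT : 1 ≤ T) (J : Set ℝ) (hJm : MeasurableSet J)
    (hJ : J ⊆ Icc T (2*T)) (w : ℝ) (hw : |w| ≤ T/2) :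
    ∫ t in J, ‖ψ.LFunction ((σ:ℂ) + ((t + w : ℝ):ℂ) * Complex.I)
      - ∑ n ∈ Finset.Icc 1 n0, ψ n * (n:ℂ)^(-((σ:ℂ) + ((t + w : ℝ):ℂ) * Complex.I))‖^2
      ≤ 2 * (4 * (n0:ℝ)^(2-2*σ) / T) + 2 * (16 * T^2 * (exp 4 * (2*π) * (9 * M^2 * (n0:ℝ)^(-(2*σ))))) := by
  obtain ⟨A, hAm, hAb, hA0, c, hc, hL⟩ := approx_formula ψ n0 hn0
  have hn0p : (0:ℝ) < n0 := by exact_mod_cast hn0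
  have hwl := abs_le.mp hw
  set a := Real.log n0 with ha
  have hea : Real.exp a = n0 := Real.exp_log hn0p
  set f : ℝ → ℂ := (Ioi a).indicator (fun v => A (Real.exp v) *
    Complex.exp (-((σ:ℂ) + (w:ℂ) * Complex.I) * v)) with hf
  have hfm : Measurable f := by
    apply Measurable.indicator _ measurableSet_Ioi
    fun_prop
  have hnorm : ∀ v : ℝ, ‖Complex.exp (-((σ:ℂ) + (w:ℂ) * Complex.I) * v)‖ = Real.exp (-σ * v) := by
    intro v
    rw [Complex.norm_exp]; congr 1; simp
  have hfb : ∀ v, ‖f v‖ ≤ (Ioi a).indicator (fun v => 3 * M * Real.exp (-σ * v)) v := by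
    intro v
    rw [hf, norm_indicator_eq_indicator_norm]
    apply Set.indicator_le_indicator
    rw [norm_mul, hnorm]
    gcongr
    exact hAb _
  have hint1 : MeasureTheory.Integrable ((Ioi a).indicator (fun v => 3 * (M:ℝ) * Real.exp (-σ * v))) := by
    rw [MeasureTheory.integrable_indicator_iff measurableSet_Ioi]
    exact (integrableOn_exp_mul_Ioi (by linarith) a).const_mul _
  have hfi : MeasureTheory.Integrable f := hint1.mono' hfm.aestronglyMeasurable
    (Filter.Eventually.of_forall hfb)
  have hfb2 : ∀ v, ‖f v‖^2 ≤ (Ioi a).indicator (fun v => 9 * M^2 * Real.exp (-(2*σ) * v)) v := by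
    intro v
    have h1 := pow_le_pow_left₀ (norm_nonneg _) (hfb v) 2
    refine h1.trans (le_of_eq ?_)
    by_cases hv : v ∈ Ioi a
    · simp only [Set.indicator_of_mem hv]
      rw [mul_pow, mul_pow, ← Real.exp_nat_mul]
      norm_num
      left; ring
    · simp only [Set.indicator_of_notMem hv]; norm_num
  have hint2 : MeasureTheory.Integrable ((Ioi a).indicator (fun v => 9 * (M:ℝ)^2 * Real.exp (-(2*σ) * v))) := by
    rw [MeasureTheory.integrable_indicator_iff measurableSet_Ioi]
    exact (integrableOn_exp_mul_Ioi (by linarith) a).const_mul _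
  have hfi2 : MeasureTheory.Integrable (fun v => ‖f v‖^2) := hint2.mono'
    (hfm.norm.pow_const 2).aestronglyMeasurable
    (Filter.Eventually.of_forall fun v => by
      rw [Real.norm_of_nonneg (by positivity)]; exact hfb2 v)
  have hI2 : ∫ v, ‖f v‖^2 ≤ 9 * M^2 * (n0:ℝ)^(-(2*σ)) := by
    refine (MeasureTheory.integral_mono hfi2 hint2 hfb2).trans ?_
    rw [MeasureTheory.integral_indicator measurableSet_Ioi, MeasureTheory.integral_const_mul,
      integral_exp_mul_Ioi (by linarith)]
    gcongr
    rw [Real.rpow_def_of_pos hn0p, ← ha]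
    rw [neg_div_neg_eq, mul_comm a]
    apply div_le_self (Real.exp_pos _).le
    linarith
  set I : ℝ → ℂ := fun t => ∫ v, f v * Complex.exp (-((t:ℂ) * (v:ℝ)) * Complex.I) with hIdef
  have hIc : Continuous I := by
    apply MeasureTheory.continuous_of_dominated (bound := fun v => ‖f v‖)
    · intro t
      apply Measurable.aestronglyMeasurable
      fun_prop
    · intro t
      refine Filter.Eventually.of_forall fun v => ?_
      rw [norm_mul, Complex.norm_exp]
      simp
    · exact hfi.norm
    · refine Filter.Eventually.of_forall fun v => ?_
      fun_prop
  -- pointwise formula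
  have hpt : ∀ t ∈ Icc T (2*T), ψ.LFunction ((σ:ℂ) + ((t + w : ℝ):ℂ) * Complex.I)
      - ∑ n ∈ Finset.Icc 1 n0, ψ n * (n:ℂ)^(-((σ:ℂ) + ((t + w : ℝ):ℂ) * Complex.I)) =
      c*(n0:ℂ)^(1-((σ:ℂ) + ((t + w : ℝ):ℂ) * Complex.I))/(((σ:ℂ) + ((t + w : ℝ):ℂ) * Complex.I)-1)
      + ((σ:ℂ) + ((t + w : ℝ):ℂ) * Complex.I) * I t := by
    intro t ht
    rw [hL ((σ:ℂ) + ((t + w : ℝ):ℂ) * Complex.I) (by simp; linarith) (by simp; linarith [ht.1])]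
    have : ∫ u in Set.Ioi (0:ℝ), (u:ℂ)^(-((σ:ℂ) + ((t + w : ℝ):ℂ) * Complex.I)-1) * A u = I t := by
      have h0 : ∫ u in Set.Ioi (0:ℝ), (u:ℂ)^(-((σ:ℂ) + ((t + w : ℝ):ℂ) * Complex.I)-1) * A u =
          ∫ u in Set.Ioi (Real.exp a), (u:ℂ)^(-((σ:ℂ) + ((t + w : ℝ):ℂ) * Complex.I)-1) * A u := by
        apply MeasureTheory.setIntegral_eq_of_subset_of_forall_sdiff_eq_zero measurableSet_Ioi
        · apply Set.Ioi_subset_Ioi (Real.exp_pos _).le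
        · rintro x ⟨_, hx⟩
          rw [hA0 x (by rw [hea] at hx; simpa using hx), mul_zero]
      rw [h0, ← MeasureTheory.integral_comp_exp_Ioi, hIdef]
      simp only
      rw [← MeasureTheory.integral_indicator measurableSet_Ioi]
      congr 1
      ext v
      by_cases hv : v ∈ Ioi a
      · rw [hf]
        simp only [Set.indicator_of_mem hv]
        rw [Complex.real_smul, Complex.cpow_def_of_ne_zero (by exact_mod_cast (Real.exp_pos v).ne'),
          ← Complex.ofReal_log (Real.exp_pos v).le, Real.log_exp]
        rw [mul_assoc, ← Complex.exp_add, ← mul_assoc, Complex.ofReal_exp, ← Complex.exp_add, mul_comm]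
        congr 2
        push_cast
        ring
      · rw [hf]
        simp only [Set.indicator_of_notMem hv, zero_mul]
    rw [this]
    ring
  have hsn : ∀ t ∈ Icc T (2*T), ‖((σ:ℂ) + ((t + w : ℝ):ℂ) * Complex.I)‖ ≤ 4 * T := by
    intro t ht
    refine (norm_add_le _ _).trans ?_
    rw [norm_mul, Complex.norm_I, Complex.norm_real, Complex.norm_real, Real.norm_of_nonneg (by linarith),
      Real.norm_of_nonneg (by linarith [ht.1])]
    linarith [ht.2]
  have hs1 : ∀ t ∈ Icc T (2*T), T/2 ≤ ‖((σ:ℂ) + ((t + w : ℝ):ℂ) * Complex.I) - 1‖ := by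
    intro t ht
    refine le_trans ?_ (Complex.abs_im_le_norm _)
    simp
    refine le_trans ?_ (le_abs_self _)
    linarith [ht.1]
  have hb : ∀ t ∈ J, ‖ψ.LFunction ((σ:ℂ) + ((t + w : ℝ):ℂ) * Complex.I)
      - ∑ n ∈ Finset.Icc 1 n0, ψ n * (n:ℂ)^(-((σ:ℂ) + ((t + w : ℝ):ℂ) * Complex.I))‖^2 ≤
      2 * (4 * (n0:ℝ)^(2-2*σ) / T^2) + 2 * (16 * T^2) * ‖I t‖^2 := by
    intro t ht
    have ht := hJ ht
    rw [hpt t ht]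
    have h1 : ‖c*(n0:ℂ)^(1-((σ:ℂ) + ((t + w : ℝ):ℂ) * Complex.I))/(((σ:ℂ) + ((t + w : ℝ):ℂ) * Complex.I)-1)‖
        ≤ 2 * (n0:ℝ)^(1-σ) / T := by
      rw [norm_div, norm_mul, Complex.norm_natCast_cpow_of_pos hn0]
      have : (1 - ((σ:ℂ) + ((t + w : ℝ):ℂ) * Complex.I)).re = 1 - σ := by simp
      rw [this]
      have h2 := hs1 t ht
      calc _ ≤ 1 * (n0:ℝ)^(1-σ) / (T/2) := by gcongr
        _ = _ := by field_simp
    have h2 : ‖((σ:ℂ) + ((t + w : ℝ):ℂ) * Complex.I) * I t‖ ≤ 4 * T * ‖I t‖ := by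
      rw [norm_mul]; gcongr; exact hsn t ht
    have h3 : ((n0:ℝ)^(1-σ))^2 = (n0:ℝ)^(2-2*σ) := by
      rw [← Real.rpow_natCast, ← Real.rpow_mul hn0p.le]; congr 1; push_cast; ring
    have h4 := norm_add_le (c*(n0:ℂ)^(1-((σ:ℂ) + ((t + w : ℝ):ℂ) * Complex.I))/(((σ:ℂ) + ((t + w : ℝ):ℂ) * Complex.I)-1)) (((σ:ℂ) + ((t + w : ℝ):ℂ) * Complex.I) * I t)
    have h5 := h4.trans (add_le_add h1 h2)
    have h6 := pow_le_pow_left₀ (norm_nonneg _) h5 2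
    refine h6.trans ?_
    have h7 : 4 * (n0:ℝ)^(2-2*σ) / T^2 = (2 * (n0:ℝ)^(1-σ) / T)^2 := by
      rw [div_pow, mul_pow, h3]; norm_num
    have h8 : 2 * (16 * T^2) * ‖I t‖^2 = 2 * (4 * T * ‖I t‖)^2 := by ring
    rw [h7, h8]
    nlinarith [sq_nonneg ((2 * (n0:ℝ)^(1-σ) / T) - 4 * T * ‖I t‖)]
  have hvol : MeasureTheory.volume J ≤ ENNReal.ofReal T := by
    refine (MeasureTheory.measure_mono hJ).trans ?_
    rw [Real.volume_Icc]; apply le_of_eq; congr 1; ring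
  have hvolfin : MeasureTheory.volume J ≠ ⊤ := (hvol.trans_lt ENNReal.ofReal_lt_top).ne
  have hvolr : (MeasureTheory.volume J).toReal ≤ T := by
    apply ENNReal.toReal_le_of_le_ofReal (by linarith) hvol
  have hIi : MeasureTheory.IntegrableOn (fun t => ‖I t‖^2) J :=
    ((hIc.norm.pow 2).continuousOn.integrableOn_Icc).mono_set hJ
  have hci : MeasureTheory.IntegrableOn (fun _ : ℝ => 2 * (4 * (n0:ℝ)^(2-2*σ) / T^2)) J :=
    MeasureTheory.integrableOn_const hvolfin
  have hpl := planch f hfi hfi2 T (by linarith) J hJm hJ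
  have hstep : ∫ t in J, ‖ψ.LFunction ((σ:ℂ) + ((t + w : ℝ):ℂ) * Complex.I)
      - ∑ n ∈ Finset.Icc 1 n0, ψ n * (n:ℂ)^(-((σ:ℂ) + ((t + w : ℝ):ℂ) * Complex.I))‖^2 ≤
      ∫ t in J, (2 * (4 * (n0:ℝ)^(2-2*σ) / T^2) + 2 * (16 * T^2) * ‖I t‖^2) := by
    apply MeasureTheory.integral_mono_of_nonneg
    · exact Filter.Eventually.of_forall fun t => by positivity
    · exact hci.add (hIi.const_mul _)
    · filter_upwards [MeasureTheory.self_mem_ae_restrict hJm] with t ht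
      exact hb t ht
  refine hstep.trans ?_
  rw [MeasureTheory.integral_add hci (hIi.const_mul _)]
  rw [MeasureTheory.setIntegral_const, MeasureTheory.measureReal_def, smul_eq_mul]
  apply add_le_add
  · have : 2 * (4 * (n0:ℝ)^(2-2*σ) / T) = T * (2 * (4 * (n0:ℝ)^(2-2*σ) / T^2)) := by
      field_simp
    rw [this]
    exact mul_le_mul_of_nonneg_right hvolr (by positivity)
  · rw [MeasureTheory.integral_const_mul, mul_assoc 2]
    gcongr
    refine hpl.trans ?_
    gcongr

/-- The oscillating factor `n ^ (-i t)`. -/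
noncomputable def osc (n : ℕ) (t : ℝ) : ℂ := Complex.exp (-((t:ℂ) * (Real.log n : ℝ)) * Complex.I)

lemma osc_norm (n : ℕ) (t : ℝ) : ‖osc n t‖ = 1 := by
  unfold osc
  have : -((t:ℂ) * (Real.log n : ℝ)) * Complex.I = ((-(t * Real.log n) : ℝ) : ℂ) * Complex.I := by
    push_cast; ring
  rw [this, Complex.norm_exp_ofReal_mul_I]

lemma osc_one (t : ℝ) : osc 1 t = 1 := by simp [osc]

lemma osc_mul (m n : ℕ) (t : ℝ) (hm : m ≠ 0) (hn : n ≠ 0) : osc (m * n) t = osc m t * osc n t := by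
  unfold osc
  rw [← Complex.exp_add]
  congr 1
  push_cast
  rw [Real.log_mul (by exact_mod_cast hm) (by exact_mod_cast hn)]
  push_cast
  ring

lemma osc_pow (m e : ℕ) (t : ℝ) : osc (m ^ e) t = osc m t ^ e := by
  unfold osc
  rw [← Complex.exp_nat_mul]
  congr 1
  push_cast
  rw [Real.log_pow]
  push_cast
  ring

lemma osc_prod {ι : Type*} (s : Finset ι) (f : ι → ℕ) (t : ℝ) (h : ∀ i ∈ s, f i ≠ 0) :
    osc (∏ i ∈ s, f i) t = ∏ i ∈ s, osc (f i) t := by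
  classical
  induction s using Finset.induction_on with
  | empty => simp [osc_one]
  | insert a s ha ih =>
    rw [Finset.prod_insert ha, Finset.prod_insert ha, osc_mul, ih]
    · intro i hi; exact h i (Finset.mem_insert_of_mem hi)
    · exact h a (Finset.mem_insert_self _ _)
    · exact Finset.prod_ne_zero_iff.mpr fun i hi => h i (Finset.mem_insert_of_mem hi)

lemma osc_continuous (n : ℕ) : Continuous (osc n) := by
  unfold osc; fun_prop

lemma prod_inj (S Pz : Finset ℕ) (hP : ∀ p ∈ Pz, p.Prime)
    (hS : ∀ r ∈ S, 1 ≤ r ∧ ∀ p ∈ Pz, ¬ p ∣ r) :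
    Function.Injective (fun y : S × (Pz → Fin 3) => (y.1 : ℕ) * ∏ p : Pz, (p : ℕ) ^ (y.2 p : ℕ)) := by
  have key : ∀ y : S × (Pz → Fin 3), ∀ p : Pz,
      ((y.1 : ℕ) * ∏ p : Pz, (p : ℕ) ^ (y.2 p : ℕ)).factorization p = (y.2 p : ℕ) := by
    intro y p
    have hpos : ∀ q : Pz, (q : ℕ) ^ (y.2 q : ℕ) ≠ 0 := fun q => pow_ne_zero _ (hP q q.2).ne_zero
    rw [Nat.factorization_mul (by have := (hS y.1 y.1.2).1; omega)
      (Finset.prod_ne_zero_iff.mpr fun q _ => hpos q)]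
    rw [Nat.factorization_prod (fun q _ => hpos q)]
    rw [Finsupp.add_apply, Nat.factorization_eq_zero_of_not_dvd ((hS y.1 y.1.2).2 p p.2), zero_add,
      Finsupp.finsetSum_apply, Finset.sum_eq_single p]
    · rw [(hP p p.2).factorization_pow]; simp
    · intro q _ hq
      rw [(hP q q.2).factorization_pow]
      rw [Finsupp.single_apply, if_neg]
      intro h; exact hq (Subtype.ext h)
    · simp
  intro y y' h
  simp only at h
  have h2 : y.2 = y'.2 := by
    ext p
    rw [← key y p, ← key y' p, h]
  have h1 : (y.1 : ℕ) = y'.1 := by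
    rw [h2] at h
    have hne : ∏ p : Pz, (p : ℕ) ^ (y'.2 p : ℕ) ≠ 0 :=
      Finset.prod_ne_zero_iff.mpr fun q _ => pow_ne_zero _ (hP q q.2).ne_zero
    exact Nat.eq_of_mul_eq_mul_right (Nat.pos_of_ne_zero hne) h
  exact Prod.ext (Subtype.ext h1) h2

lemma prod_expand (S Pz : Finset ℕ) (hP : ∀ p ∈ Pz, p.Prime)
    (hS : ∀ r ∈ S, 1 ≤ r) (b : ℕ → ℂ) (f : ℕ → Fin 3 → ℂ) (t : ℝ) :
    (∑ r ∈ S, b r * osc r t) * ∏ p ∈ Pz, ∑ e : Fin 3, f p e * osc p t ^ (e : ℕ) =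
    ∑ y : S × (Pz → Fin 3), (b y.1 * ∏ p : Pz, f p (y.2 p)) *
      osc ((y.1 : ℕ) * ∏ p : Pz, (p : ℕ) ^ (y.2 p : ℕ)) t := by
  rw [Fintype.sum_prod_type, ← Finset.sum_coe_sort, Finset.sum_mul]
  refine Finset.sum_congr rfl fun r _ => ?_
  rw [← Finset.prod_coe_sort, Finset.prod_univ_sum, Fintype.piFinset_univ, Finset.mul_sum]
  refine Finset.sum_congr rfl fun x _ => ?_
  rw [Finset.prod_mul_distrib]
  have hpos : ∀ q : Pz, (q : ℕ) ^ (x q : ℕ) ≠ 0 := fun q => pow_ne_zero _ (hP q q.2).ne_zero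
  have hr0 : (r : ℕ) ≠ 0 := by have := hS r r.2; omega
  rw [osc_mul _ _ _ hr0 (Finset.prod_ne_zero_iff.mpr fun q _ => hpos q),
    osc_prod _ _ _ (fun q _ => hpos q)]
  simp only [osc_pow]
  ring

lemma prod_mv : ∃ K : ℝ, 0 < K ∧ ∀ (S Pz : Finset ℕ) (b : ℕ → ℂ) (f : ℕ → Fin 3 → ℂ) (T : ℝ)
    (J : Set ℝ), 0 < T → (∀ p ∈ Pz, p.Prime) → (∀ r ∈ S, 1 ≤ r ∧ ∀ p ∈ Pz, ¬ p ∣ r) →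
    (∀ r ∈ S, (r : ℝ) * ((∏ p ∈ Pz, p : ℕ) : ℝ)^2 ≤ T) → MeasurableSet J → J ⊆ Icc T (2*T) →
    ∫ t in J, ‖(∑ r ∈ S, b r * osc r t) * ∏ p ∈ Pz, ∑ e : Fin 3, f p e * osc p t ^ (e : ℕ)‖^2 ≤
      K * T * ((∑ r ∈ S, ‖b r‖^2) * ∏ p ∈ Pz, ∑ e : Fin 3, ‖f p e‖^2) := by
  obtain ⟨K, hK, hmv⟩ := mean_value
  refine ⟨K, hK, ?_⟩
  intro S Pz b f T J hT hP hS hle hJm hJ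
  have := hmv (fun y : S × (Pz → Fin 3) => (y.1 : ℕ) * ∏ p : Pz, (p : ℕ) ^ (y.2 p : ℕ))
    (fun y => b y.1 * ∏ p : Pz, f p (y.2 p)) T J hT (prod_inj S Pz hP hS) ?_ ?_ hJm hJ
  · have h1 : ∑ y : S × (Pz → Fin 3), ‖b y.1 * ∏ p : Pz, f p (y.2 p)‖^2 =
        (∑ r ∈ S, ‖b r‖^2) * ∏ p ∈ Pz, ∑ e : Fin 3, ‖f p e‖^2 := by
      rw [Fintype.sum_prod_type, ← Finset.sum_coe_sort S (fun r => ‖b r‖^2), Finset.sum_mul]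
      refine Finset.sum_congr rfl fun r _ => ?_
      rw [← Finset.prod_coe_sort Pz (fun p => ∑ e : Fin 3, ‖f p e‖^2), Finset.prod_univ_sum, Fintype.piFinset_univ, Finset.mul_sum]
      refine Finset.sum_congr rfl fun x _ => ?_
      rw [norm_mul, mul_pow, norm_prod, Finset.prod_pow]
    rw [h1] at this
    refine le_trans (le_of_eq ?_) this
    congr 1
    ext t
    rw [prod_expand S Pz hP (fun r hr => (hS r hr).1)]
    rfl
  · intro y
    exact Nat.one_le_iff_ne_zero.mpr (mul_ne_zero (by have := (hS y.1 y.1.2).1; omega)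
      (Finset.prod_ne_zero_iff.mpr fun q _ => pow_ne_zero _ (hP q q.2).ne_zero))
  · intro y
    refine le_trans ?_ (hle y.1 y.1.2)
    push_cast
    gcongr
    rw [← Finset.prod_pow, ← Finset.prod_coe_sort Pz (fun p => (p:ℝ)^2)]
    refine Finset.prod_le_prod (fun _ _ => by positivity) fun p _ => ?_
    apply pow_le_pow_right₀
    · exact_mod_cast (hP p p.2).one_le
    · have := (y.2 p).isLt; omega

lemma norm_sq_osc_sum {ι : Type*} [Fintype ι] (g : ι → ℕ) (t : ℝ) :
    ‖∑ i, osc (g i) t‖^2 = ∑ i, ∑ j, Real.cos ((Real.log (g i) - Real.log (g j)) * t) := by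
  have h : ∀ i, osc (g i) t = (Real.cos (t * Real.log (g i)) : ℝ) - (Real.sin (t * Real.log (g i)) : ℝ) * Complex.I := by
    intro i
    unfold osc
    have : -((t:ℂ) * (Real.log (g i) : ℝ)) * Complex.I = ((-(t * Real.log (g i)) : ℝ) : ℂ) * Complex.I := by
      push_cast; ring
    rw [this, Complex.exp_mul_I, ← Complex.ofReal_cos, ← Complex.ofReal_sin, Real.cos_neg, Real.sin_neg]
    push_cast; ring
  have hre : (∑ i, osc (g i) t).re = ∑ i, Real.cos (t * Real.log (g i)) := by
    rw [Complex.re_sum]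
    refine Finset.sum_congr rfl fun i _ => ?_
    rw [h i, Complex.sub_re, Complex.ofReal_re, Complex.re_ofReal_mul, Complex.I_re]; ring
  have him : (∑ i, osc (g i) t).im = ∑ i, -Real.sin (t * Real.log (g i)) := by
    rw [Complex.im_sum]
    refine Finset.sum_congr rfl fun i _ => ?_
    rw [h i, Complex.sub_im, Complex.ofReal_im, Complex.im_ofReal_mul, Complex.I_im]; ring
  rw [Complex.sq_norm, Complex.normSq_apply, hre, him, Finset.sum_mul_sum, Finset.sum_mul_sum,
    ← Finset.sum_add_distrib]
  refine Finset.sum_congr rfl fun i _ => ?_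
  rw [← Finset.sum_add_distrib]
  refine Finset.sum_congr rfl fun j _ => ?_
  rw [sub_mul, Real.cos_sub, mul_comm t, mul_comm t]
  ring

lemma osc_lower {ι : Type*} [Fintype ι] [DecidableEq ι] (g : ι → ℕ) (hg : Function.Injective g) (X : ℝ)
    (h1 : ∀ i, 1 ≤ g i) (hX : ∀ i, (g i : ℝ) ≤ X) (a b : ℝ) (hab : a ≤ b) :
    (b - a) * Fintype.card ι - (Fintype.card ι : ℝ)^2 * (2 * X) ≤
      ∫ t in Icc a b, ‖∑ i, osc (g i) t‖^2 := by
  rw [MeasureTheory.integral_Icc_eq_integral_Ioc, ← intervalIntegral.integral_of_le hab]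
  simp_rw [norm_sq_osc_sum]
  rw [intervalIntegral.integral_finsetSum (fun i _ => Continuous.intervalIntegrable (by fun_prop) _ _)]
  have hij : ∀ i j, (if i = j then (b - a) else 0) - 2 * X ≤
      ∫ t in a..b, Real.cos ((Real.log (g i) - Real.log (g j)) * t) := by
    intro i j
    have hX0 : 1 ≤ X := le_trans (by exact_mod_cast h1 i) (hX i)
    by_cases hh : i = j
    · subst hh
      simp
      linarith
    · rw [if_neg hh]
      set l := Real.log (g i) - Real.log (g j) with hl
      have hsep := log_sep (g i) (g j) X (h1 i) (h1 j) (hX i) (hX j)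
      have hne : g i ≠ g j := fun h => hh (hg h)
      have hne' : (g i : ℤ) - g j ≠ 0 := by
        intro h; apply hne; omega
      have hone : (1 : ℝ) ≤ |(g i : ℝ) - g j| := by
        have := Int.one_le_abs hne'
        exact_mod_cast this
      rw [← hl] at hsep
      have hlpos : 0 < |l| := by
        by_contra h
        have : |l| = 0 := le_antisymm (not_lt.mp h) (abs_nonneg _)
        rw [this] at hsep; linarith
      have hl0 : l ≠ 0 := abs_pos.mp hlpos
      rw [intervalIntegral.integral_comp_mul_left (fun x => Real.cos x) hl0, integral_cos, smul_eq_mul]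
      have hb : |l⁻¹ * (Real.sin (l * b) - Real.sin (l * a))| ≤ X * 2 := by
        rw [abs_mul, abs_inv]
        apply mul_le_mul
        · rw [inv_le_comm₀ hlpos (by linarith)]
          rw [inv_le_iff_one_le_mul₀ (by linarith)]
          linarith
        · rw [abs_le]
          constructor <;> linarith [Real.sin_le_one (l*b), Real.sin_le_one (l*a), Real.neg_one_le_sin (l*b), Real.neg_one_le_sin (l*a)]
        · positivity
        · linarith
      linarith [(abs_le.mp hb).1]
  have hsum : ∑ i : ι, ∑ j : ι, ((if i = j then (b - a) else 0) - 2 * X) =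
      (b - a) * Fintype.card ι - (Fintype.card ι : ℝ)^2 * (2 * X) := by
    simp [Finset.sum_sub_distrib]
    ring
  rw [← hsum]
  refine Finset.sum_le_sum fun i _ => ?_
  rw [intervalIntegral.integral_finsetSum (fun i _ => Continuous.intervalIntegrable (by fun_prop) _ _)]
  exact Finset.sum_le_sum fun j _ => hij i j

lemma reson_lower (P : Finset ℕ) (hP : ∀ p ∈ P, p.Prime) (X : ℝ) (hX : ((∏ p ∈ P, p : ℕ) : ℝ) ≤ X)
    (a b : ℝ) (hab : a ≤ b) :
    (b - a) * 2^P.card - (4:ℝ)^P.card * (2 * X) ≤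
      ∫ t in Icc a b, ‖∏ p ∈ P, (1 + osc p t)‖^2 := by
  have hexp : ∀ t, ∏ p ∈ P, (1 + osc p t) = ∑ A : P.powerset, osc (∏ p ∈ (A : Finset ℕ), p) t := by
    intro t
    rw [Finset.prod_one_add, ← Finset.sum_coe_sort]
    refine Finset.sum_congr rfl fun A _ => ?_
    rw [osc_prod]
    intro i hi
    exact (hP i (Finset.mem_powerset.mp A.2 hi)).ne_zero
  have hinj : Function.Injective (fun A : P.powerset => ∏ p ∈ (A : Finset ℕ), p) := by
    intro A B h
    apply Subtype.ext
    have := congrArg Nat.primeFactors h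
    simp only at this
    rwa [Nat.primeFactors_prod, Nat.primeFactors_prod] at this
    · exact fun p hp => hP p (Finset.mem_powerset.mp B.2 hp)
    · exact fun p hp => hP p (Finset.mem_powerset.mp A.2 hp)
  have := osc_lower (fun A : P.powerset => ∏ p ∈ (A : Finset ℕ), p) hinj X ?_ ?_ a b hab
  · simp_rw [hexp]
    refine le_trans (le_of_eq ?_) this
    rw [Fintype.card_coe, Finset.card_powerset]
    push_cast
    rw [← pow_mul, mul_comm P.card 2, pow_mul]
    norm_num
  · intro A
    exact Finset.one_le_prod' fun p hp => (hP p (Finset.mem_powerset.mp A.2 hp)).one_le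
  · intro A
    refine le_trans ?_ hX
    norm_cast
    exact Finset.prod_le_prod_of_subset_of_one_le' (Finset.mem_powerset.mp A.2)
      fun p hp _ => (hP p hp).one_le

lemma phase_align (v : ℂ) (hv : ‖v‖ = 1) (z : ℕ) (hz : 3 ≤ z) : ∃ w : ℝ, |w| ≤ π / Real.log z ∧
    ∀ p : ℕ, (z:ℝ)^(3/4 : ℝ) < p → p ≤ z → 1/2 ≤ (v * osc p w).re := by
  have hz1 : (1:ℝ) < z := by exact_mod_cast (by omega : 1 < z)
  have hlz : 0 < Real.log z := Real.log_pos hz1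
  refine ⟨Complex.arg v / Real.log z, ?_, ?_⟩
  · rw [abs_div, abs_of_pos hlz]
    gcongr
    exact Complex.abs_arg_le_pi v
  · intro p hp hpz
    have hp0 : (0:ℝ) < p := lt_of_le_of_lt (by positivity) hp
    have h1 : 3/4 * Real.log z < Real.log p := by
      rw [← Real.log_rpow (by linarith)]
      exact Real.log_lt_log (by positivity) hp
    have h2 : Real.log p ≤ Real.log z := Real.log_le_log hp0 (by exact_mod_cast hpz)
    have hv' : v = Complex.exp (Complex.arg v * Complex.I) := by
      conv_lhs => rw [← Complex.norm_mul_exp_arg_mul_I v, hv]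
      simp
    set θ := Complex.arg v with hθ
    have hprod : v * osc p (θ / Real.log z) =
        Complex.exp (((θ * (1 - Real.log p / Real.log z) : ℝ) : ℂ) * Complex.I) := by
      rw [hv']
      unfold osc
      rw [← Complex.exp_add]
      congr 1
      push_cast
      ring
    rw [hprod, Complex.exp_ofReal_mul_I_re]
    have hb1 : 0 ≤ 1 - Real.log p / Real.log z := by
      rw [sub_nonneg, div_le_one hlz]; exact h2
    have hb2 : 1 - Real.log p / Real.log z ≤ 1/4 := by
      have : 3/4 ≤ Real.log p / Real.log z := by rw [le_div_iff₀ hlz]; exact h1.le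
      linarith
    have hθb : |θ| ≤ π := Complex.abs_arg_le_pi v
    rw [← Real.cos_abs, ← Real.cos_pi_div_three]
    apply Real.cos_le_cos_of_nonneg_of_le_pi (abs_nonneg _)
    · linarith [Real.pi_pos]
    · rw [abs_mul, abs_of_nonneg hb1]
      calc _ ≤ π * (1/4) := by gcongr
        _ ≤ π / 3 := by linarith [Real.pi_pos]

lemma prime_sel (q : ℕ) (hq : 1 ≤ q) : ∃ c : ℝ, 0 < c ∧ ∃ z0 : ℕ, ∀ z : ℕ, z0 ≤ z →
    ∃ (P : Finset ℕ) (a : ZMod q), (∀ p ∈ P, p.Prime ∧ p ≤ z ∧ (z:ℝ)^(3/4 : ℝ) < p ∧ q < p ∧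
      (p : ZMod q) = a) ∧ c * z / Real.log z ≤ P.card := by
  have : NeZero q := ⟨by omega⟩
  have hq0 : (0:ℝ) < q := by exact_mod_cast hq
  refine ⟨2/5 / q, by positivity, ?_⟩
  have e1 : ∀ᶠ x : ℝ in Filter.atTop, ‖Real.log x‖ ≤ (1/100) * ‖x‖ :=
    Real.isLittleO_log_id_atTop.bound (by norm_num)
  have e2 : ∀ᶠ x : ℝ in Filter.atTop, ‖Real.log x‖ ≤ (1/10) * ‖x^(1/4 : ℝ)‖ :=
    (isLittleO_log_rpow_atTop (by norm_num)).bound (by norm_num)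
  have e3 : ∀ᶠ x : ℝ in Filter.atTop, (q:ℝ) ≤ x^(3/4:ℝ) :=
    (tendsto_rpow_atTop (by norm_num)).eventually_ge_atTop _
  have e4 := Filter.eventually_ge_atTop (3:ℝ)
  have e5 := (Filter.tendsto_atTop_add_const_right Filter.atTop (1:ℝ) Filter.tendsto_id).eventually e1
  have eall := (((e2.and e3).and e4).and e5)
  have eN := tendsto_natCast_atTop_atTop.eventually eall
  rw [Filter.eventually_atTop] at eN
  obtain ⟨z0, hz0⟩ := eN
  refine ⟨z0, fun z hz => ?_⟩
  obtain ⟨⟨⟨h2, h3⟩, h4⟩, h5⟩ := hz0 z hz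
  have hzp : (0:ℝ) < z := by linarith
  have hlz : 0 < Real.log z := Real.log_pos (by linarith)
  simp only [id] at h5
  rw [Real.norm_of_nonneg (Real.log_nonneg (by linarith)), Real.norm_of_nonneg (by linarith)] at h5
  rw [Real.norm_of_nonneg hlz.le, Real.norm_of_nonneg (by positivity)] at h2
  set S := (Finset.range (z+1)).filter (fun p : ℕ => p.Prime ∧ (z:ℝ)^(3/4:ℝ) < p) with hS
  have hpi := Chebyshev.pi_ge z
  have hcard : (Nat.primeCounting z : ℝ) - (z:ℝ)^(3/4:ℝ) - 1 ≤ S.card := by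
    rw [Nat.primeCounting, Nat.primeCounting', Nat.count_eq_card_filter_range]
    have hsub : (Finset.range (z+1)).filter Nat.Prime ⊆ S ∪ Finset.range (⌊(z:ℝ)^(3/4:ℝ)⌋₊ + 1) := by
      intro p hp
      rw [Finset.mem_filter] at hp
      rw [Finset.mem_union]
      by_cases h : (z:ℝ)^(3/4:ℝ) < p
      · left; rw [hS, Finset.mem_filter]; exact ⟨hp.1, hp.2, h⟩
      · right
        rw [Finset.mem_range, Nat.lt_succ_iff]
        exact Nat.le_floor (not_lt.mp h)
    have h := (Finset.card_le_card hsub).trans (Finset.card_union_le _ _)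
    rw [Finset.card_range] at h
    have h' : (((Finset.range (z+1)).filter Nat.Prime).card : ℝ) ≤ S.card + (⌊(z:ℝ)^(3/4:ℝ)⌋₊ + 1) := by
      exact_mod_cast h
    have hfl := Nat.floor_le (show 0 ≤ (z:ℝ)^(3/4:ℝ) by positivity)
    linarith
  have hSc : 2/5 * z / Real.log z ≤ S.card := by
    have hx : (z:ℝ)^(3/4:ℝ) * Real.log z ≤ 1/10 * z := by
      calc (z:ℝ)^(3/4:ℝ) * Real.log z ≤ (z:ℝ)^(3/4:ℝ) * (1/10 * (z:ℝ)^(1/4:ℝ)) := by gcongr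
        _ = 1/10 * ((z:ℝ)^(3/4:ℝ) * (z:ℝ)^(1/4:ℝ)) := by ring
        _ = 1/10 * z := by rw [← Real.rpow_add hzp]; norm_num
    have hlog : Real.log z ≤ Real.log (z+1) := Real.log_le_log hzp (by linarith)
    have hl2 := Real.log_two_gt_d9
    refine le_trans ?_ hcard
    refine le_trans ?_ (sub_le_sub_right (sub_le_sub_right hpi _) _)
    rw [div_le_iff₀ hlz, sub_mul, sub_mul, div_mul_cancel₀ _ hlz.ne', one_mul]
    nlinarith
  obtain ⟨a, _, ha⟩ := Finset.exists_le_card_fiber_of_nsmul_le_card_of_maps_to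
    (s := S) (t := (Finset.univ : Finset (ZMod q))) (f := fun p => (p : ZMod q))
    (b := 2/5 / q * z / Real.log z) (fun _ _ => Finset.mem_univ _) Finset.univ_nonempty (by
      rw [Finset.card_univ, ZMod.card, nsmul_eq_mul]
      refine le_trans (le_of_eq ?_) hSc
      field_simp)
  refine ⟨S.filter (fun p => (p : ZMod q) = a), a, ?_, ha⟩
  intro p hp
  rw [Finset.mem_filter, hS, Finset.mem_filter, Finset.mem_range] at hp
  refine ⟨hp.1.2.1, by omega, hp.1.2.2, ?_, hp.2⟩
  exact_mod_cast lt_of_le_of_lt h3 hp.1.2.2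

lemma prime_sel_chars (k : ℕ) (N : Fin k → ℕ) [∀ j, NeZero (N j)]
    (χ : ∀ j, DirichletCharacter ℂ (N j)) : ∃ c : ℝ, 0 < c ∧ ∃ z0 : ℕ, ∀ z : ℕ, z0 ≤ z →
    ∃ (P : Finset ℕ) (w : Fin k → ℝ), (∀ p ∈ P, p.Prime ∧ p ≤ z) ∧
      (∀ j, |w j| ≤ π / Real.log z) ∧
      (∀ j, ∀ p ∈ P, 1/2 ≤ (χ j (p : ZMod (N j)) * osc p (w j)).re) ∧
      c * z / Real.log z ≤ P.card := by
  set q := ∏ j, N j with hq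
  have hq1 : 1 ≤ q := Nat.one_le_iff_ne_zero.mpr (Finset.prod_ne_zero_iff.mpr fun j _ => NeZero.ne _)
  obtain ⟨c, hc, z0, h⟩ := prime_sel q hq1
  refine ⟨c, hc, max z0 3, fun z hz => ?_⟩
  obtain ⟨P, a, hP, hcard⟩ := h z (le_trans (le_max_left _ _) hz)
  have hz3 : 3 ≤ z := le_trans (le_max_right _ _) hz
  have hv : ∀ j, ∃ v : ℂ, ‖v‖ = 1 ∧ ∀ p ∈ P, χ j (p : ZMod (N j)) = v := by
    intro j
    rcases P.eq_empty_or_nonempty with rfl | ⟨p0, hp0⟩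
    · exact ⟨1, by simp, by simp⟩
    · have hdvd : N j ∣ q := Finset.dvd_prod_of_mem _ (Finset.mem_univ j)
      refine ⟨χ j (p0 : ZMod (N j)), ?_, ?_⟩
      · have hcop : p0.Coprime (N j) := by
          rw [(hP p0 hp0).1.coprime_iff_not_dvd]
          intro hd
          have := Nat.le_of_dvd (by omega) (hd.trans hdvd)
          have := (hP p0 hp0).2.2.2.1
          omega
        have := DirichletCharacter.unit_norm_eq_one (χ j) (ZMod.unitOfCoprime p0 hcop)
        rwa [ZMod.coe_unitOfCoprime] at this
      · intro p hp
        congr 1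
        have h1 := (hP p hp).2.2.2.2
        have h2 := (hP p0 hp0).2.2.2.2
        have h3 : (p : ZMod q) = (p0 : ZMod q) := h1.trans h2.symm
        rw [ZMod.natCast_eq_natCast_iff] at h3 ⊢
        exact h3.of_dvd hdvd
  choose v hv1 hv2 using hv
  choose w hw1 hw2 using fun j => phase_align (v j) (hv1 j) z hz3
  refine ⟨P, w, fun p hp => ⟨(hP p hp).1, (hP p hp).2.1⟩, hw1, ?_, hcard⟩
  intro j p hp
  rw [hv2 j p hp]
  exact hw2 j p (hP p hp).2.2.1 (hP p hp).2.1

lemma cpow_osc (n : ℕ) (hn : 1 ≤ n) (σ t w : ℝ) :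
    (n:ℂ)^(-((σ:ℂ) + ((t + w : ℝ):ℂ) * Complex.I)) = (((n:ℝ)^(-σ) : ℝ) : ℂ) * osc n w * osc n t := by
  have hn0 : (0:ℝ) < n := by exact_mod_cast hn
  rw [Complex.cpow_def_of_ne_zero (by exact_mod_cast hn0.ne'), Complex.natCast_log.symm]
  rw [Real.rpow_def_of_pos hn0, Complex.ofReal_exp]
  unfold osc
  rw [← Complex.exp_add, ← Complex.exp_add]
  congr 1
  push_cast
  ring

/-- Coefficient `χ(p) p^{-σ-iw}`. -/
noncomputable def cof {M : ℕ} (χ : DirichletCharacter ℂ M) (σ w : ℝ) (n : ℕ) : ℂ :=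
  χ (n : ZMod M) * (((n:ℝ)^(-σ) : ℝ) : ℂ) * osc n w

lemma cof_norm_sq {M : ℕ} (χ : DirichletCharacter ℂ M) (σ w : ℝ) (n : ℕ) :
    ‖cof χ σ w n‖^2 ≤ (n:ℝ)^(-(2*σ)) := by
  unfold cof
  rw [norm_mul, osc_norm, mul_one, norm_mul, Complex.norm_real, Real.norm_of_nonneg (by positivity)]
  have h1 := DirichletCharacter.norm_le_one χ (n : ZMod M)
  have h2 : ((n:ℝ)^(-σ))^2 = (n:ℝ)^(-(2*σ)) := by
    rw [← Real.rpow_natCast, ← Real.rpow_mul (by positivity)]; congr 1; push_cast; ring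
  rw [mul_pow, h2]
  have h3 : ‖χ (n : ZMod M)‖^2 ≤ 1 := pow_le_one₀ (norm_nonneg _) h1
  have h4 : 0 ≤ (n:ℝ)^(-(2*σ)) := by positivity
  nlinarith

/-- Primes up to `z`. -/
def primesTo (z : ℕ) : Finset ℕ := (Finset.range (z+1)).filter Nat.Prime

lemma mem_primesTo (z p : ℕ) : p ∈ primesTo z ↔ p ≤ z ∧ p.Prime := by
  unfold primesTo
  rw [Finset.mem_filter, Finset.mem_range, Nat.lt_succ_iff]

lemma prod_primesTo (z : ℕ) : ∏ p ∈ primesTo z, p = primorial z := rfl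

lemma bound_A (σ : ℝ) (hσ1 : 1/2 < σ) : ∃ K : ℝ, 0 < K ∧ ∀ {N : ℕ} (χ : DirichletCharacter ℂ N)
    (w : ℝ) (z : ℕ) (P : Finset ℕ) (T : ℝ) (J : Set ℝ), 0 < T → P ⊆ primesTo z →
    (∀ p ∈ P, 1/2 ≤ (χ (p : ZMod N) * osc p w).re) →
    ((primorial z : ℕ):ℝ)^2 ≤ T → MeasurableSet J → J ⊆ Icc T (2*T) →
    ∫ t in J, ‖(∏ p ∈ primesTo z, (1 - cof χ σ w p * osc p t)) * ∏ p ∈ P, (1 + osc p t)‖^2 ≤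
      K * T * 2^P.card * Real.exp (-(P.card * (z:ℝ)^(-σ) / 2)) := by
  obtain ⟨K, hK, hmv⟩ := prod_mv
  have hsum : Summable (fun n : ℕ => (n:ℝ)^(-(2*σ))) := Real.summable_nat_rpow.mpr (by linarith)
  set Z := ∑' n : ℕ, (n:ℝ)^(-(2*σ)) with hZ
  refine ⟨K * Real.exp Z, by positivity, ?_⟩
  intro N χ w z P T J hT hPz hre hle hJm hJ
  set f : ℕ → Fin 3 → ℂ := fun p => if p ∈ P then ![1, 1 - cof χ σ w p, -cof χ σ w p]
    else ![1, -cof χ σ w p, 0] with hf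
  have h := hmv {1} (primesTo z) (fun _ => 1) f T J hT (fun p hp => ((mem_primesTo z p).mp hp).2)
    (by
      intro r hr
      rw [Finset.mem_singleton] at hr
      subst hr
      exact ⟨le_refl _, fun p hp => (Nat.Prime.not_dvd_one ((mem_primesTo z p).mp hp).2)⟩)
    (by
      intro r hr
      rw [Finset.mem_singleton] at hr
      subst hr
      rw [prod_primesTo]; simpa using hle) hJm hJ
  have hprod : ∀ t, (∏ p ∈ primesTo z, (1 - cof χ σ w p * osc p t)) * ∏ p ∈ P, (1 + osc p t) =
      (∑ r ∈ ({1} : Finset ℕ), (1:ℂ) * osc r t) * ∏ p ∈ primesTo z, ∑ e : Fin 3, f p e * osc p t ^ (e : ℕ) := by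
    intro t
    rw [Finset.sum_singleton, osc_one, one_mul, one_mul]
    have : ∏ p ∈ P, (1 + osc p t) = ∏ p ∈ primesTo z, if p ∈ P then (1 + osc p t) else 1 := by
      rw [Finset.prod_ite_mem, Finset.inter_eq_right.mpr hPz]
    rw [this, ← Finset.prod_mul_distrib]
    refine Finset.prod_congr rfl fun p _ => ?_
    rw [Fin.sum_univ_three]
    by_cases hp : p ∈ P
    · simp [hf, hp]; ring
    · simp [hf, hp]; ring
  simp_rw [hprod]
  refine h.trans ?_
  rw [Finset.sum_singleton, norm_one, one_pow, one_mul]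
  have hfac : ∀ p ∈ primesTo z, ∑ e : Fin 3, ‖f p e‖^2 ≤
      Real.exp ((p:ℝ)^(-(2*σ))) * (if p ∈ P then 2 * Real.exp (-((z:ℝ)^(-σ)/2)) else 1) := by
    intro p hpz
    have hpp := ((mem_primesTo z p).mp hpz)
    have hp0 : (0:ℝ) < p := by exact_mod_cast hpp.2.pos
    rw [Fin.sum_univ_three]
    have hn := cof_norm_sq χ σ w p
    by_cases hp : p ∈ P
    · simp only [hf, hp, if_true]
      simp only [Matrix.cons_val_zero, Matrix.cons_val_one, Matrix.cons_val, norm_one, norm_neg]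
      have h1 : ‖1 - cof χ σ w p‖^2 = 1 - 2 * (cof χ σ w p).re + ‖cof χ σ w p‖^2 := by
        rw [Complex.sq_norm, Complex.sq_norm, Complex.normSq_apply, Complex.normSq_apply]
        simp
        ring
      have h2 : (z:ℝ)^(-σ)/2 ≤ (cof χ σ w p).re := by
        have : cof χ σ w p = (((p:ℝ)^(-σ) : ℝ) : ℂ) * (χ (p : ZMod N) * osc p w) := by
          unfold cof; ring
        rw [this, Complex.re_ofReal_mul]
        have h3 : (z:ℝ)^(-σ) ≤ (p:ℝ)^(-σ) :=
          Real.rpow_le_rpow_of_nonpos hp0 (by exact_mod_cast hpp.1) (by linarith)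
        have h4 := hre p hp
        have h5 : 0 ≤ (z:ℝ)^(-σ) := by positivity
        nlinarith
      rw [h1]
      calc _ = 2 * ((‖cof χ σ w p‖^2 - (cof χ σ w p).re) + 1) := by ring
        _ ≤ 2 * (((p:ℝ)^(-(2*σ)) + -((z:ℝ)^(-σ)/2)) + 1) := by linarith
        _ ≤ 2 * Real.exp ((p:ℝ)^(-(2*σ)) + -((z:ℝ)^(-σ)/2)) := by
          gcongr; exact Real.add_one_le_exp _
        _ = _ := by rw [Real.exp_add]; ring
    · simp only [hf, hp, if_false]
      simp only [Matrix.cons_val_zero, Matrix.cons_val_one, Matrix.cons_val, norm_one, norm_neg, norm_zero, mul_one]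
      have := Real.add_one_le_exp ((p:ℝ)^(-(2*σ)))
      linarith
  have hP2 : ∏ p ∈ primesTo z, ∑ e : Fin 3, ‖f p e‖^2 ≤
      Real.exp Z * (2^P.card * Real.exp (-(P.card * (z:ℝ)^(-σ) / 2))) := by
    refine (Finset.prod_le_prod (fun _ _ => Finset.sum_nonneg fun _ _ => by positivity) hfac).trans ?_
    rw [Finset.prod_mul_distrib, ← Real.exp_sum, Finset.prod_ite_mem, Finset.inter_eq_right.mpr hPz,
      Finset.prod_const, mul_pow, ← Real.exp_nat_mul]
    gcongr
    · exact hsum.sum_le_tsum _ (fun _ _ => by positivity)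
    · apply le_of_eq; ring
  calc _ ≤ K * T * (Real.exp Z * (2^P.card * Real.exp (-(P.card * (z:ℝ)^(-σ) / 2)))) := by gcongr
    _ = _ := by ring

lemma L_mul_Q {N : ℕ} [NeZero N] (χ : DirichletCharacter ℂ N) (z : ℕ) (hz : N ≤ z) (σ t w : ℝ)
    (him : t + w ≠ 0) [NeZero (N * primorial z)] :
    (DirichletCharacter.changeLevel (Dvd.intro (primorial z) rfl : N ∣ N * primorial z) χ).LFunction
      ((σ:ℂ) + ((t + w : ℝ):ℂ) * Complex.I) =
    χ.LFunction ((σ:ℂ) + ((t + w : ℝ):ℂ) * Complex.I) *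
      ∏ p ∈ primesTo z, (1 - cof χ σ w p * osc p t) := by
  rw [DirichletCharacter.LFunction_changeLevel _ _ (Or.inr ?_)]
  · congr 1
    have hpf : (N * primorial z).primeFactors = primesTo z := by
      rw [Nat.primeFactors_mul (NeZero.ne N) (primorial_pos z).ne']
      have h2 : (primorial z).primeFactors = primesTo z := by
        rw [← prod_primesTo]
        exact Nat.primeFactors_prod fun p hp => ((mem_primesTo z p).mp hp).2
      rw [h2]
      apply Finset.union_eq_right.mpr
      intro p hp
      rw [mem_primesTo]
      exact ⟨(Nat.le_of_dvd (NeZero.pos N) (Nat.dvd_of_mem_primeFactors hp)).trans hz,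
        Nat.prime_of_mem_primeFactors hp⟩
    rw [hpf]
    refine Finset.prod_congr rfl fun p hp => ?_
    rw [cpow_osc p ((mem_primesTo z p).mp hp).2.one_le]
    unfold cof
    ring
  · intro h
    have := congrArg Complex.im h
    simp at this
    exact him (by exact_mod_cast this)

lemma L_cont {N : ℕ} [NeZero N] (χ : DirichletCharacter ℂ N) (σ T w : ℝ) (hT : 1 ≤ T) (hw : |w| ≤ T/2) :
    ContinuousOn (fun t : ℝ => χ.LFunction ((σ:ℂ) + ((t + w : ℝ):ℂ) * Complex.I)) (Icc T (2*T)) := by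
  intro t ht
  apply ContinuousAt.continuousWithinAt
  have hne : (σ:ℂ) + ((t + w : ℝ):ℂ) * Complex.I ≠ 1 := by
    intro h
    have := congrArg Complex.im h
    simp at this
    have h' : t + w = 0 := by exact_mod_cast this
    linarith [(abs_le.mp hw).1, ht.1]
  have h1 := (DirichletCharacter.differentiableAt_LFunction χ _ (Or.inl hne)).continuousAt
  exact ContinuousAt.comp (f := fun t : ℝ => (σ:ℂ) + ((t + w : ℝ):ℂ) * Complex.I) h1 (by fun_prop)

lemma bound_B (σ : ℝ) (hσ1 : 1/2 < σ) (hσ2 : σ < 1) : ∃ K : ℝ, 0 < K ∧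
    ∀ {N : ℕ} [NeZero N] (χ : DirichletCharacter ℂ N)
    (w : ℝ) (z n0 : ℕ) (P : Finset ℕ) (T ε : ℝ) (J : Set ℝ), 1 ≤ T → P ⊆ primesTo z → N ≤ z → 1 ≤ n0 →
    |w| ≤ T/2 →
    (∀ S : Finset ℕ, (∀ n ∈ S, z < n) → ∑ n ∈ S, (n:ℝ)^(-(2*σ)) ≤ ε) →
    (n0:ℝ) * ((primorial z : ℕ):ℝ)^2 ≤ T → MeasurableSet J → J ⊆ Icc T (2*T) →
    ∫ t in J, ‖(χ.LFunction ((σ:ℂ) + ((t + w : ℝ):ℂ) * Complex.I) *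
        (∏ p ∈ primesTo z, (1 - cof χ σ w p * osc p t)) - 1) * ∏ p ∈ P, (1 + osc p t)‖^2 ≤
      K * T * 2^P.card * ε + 2 * 4^P.card * (2 * (4 * (n0:ℝ)^(2-2*σ) / T) +
        2 * (16 * T^2 * (exp 4 * (2*π) * (9 * ((N * primorial z : ℕ):ℝ)^2 * (n0:ℝ)^(-(2*σ)))))) := by
  obtain ⟨K, hK, hmv⟩ := prod_mv
  refine ⟨2 * K, by positivity, ?_⟩
  intro N _ χ w z n0 P T ε J hT hPz hNz hn0 hw hε hle hJm hJ
  have : NeZero (N * primorial z) := ⟨mul_ne_zero (NeZero.ne N) (primorial_pos z).ne'⟩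
  set ψ := DirichletCharacter.changeLevel (Dvd.intro (primorial z) rfl : N ∣ N * primorial z) χ with hψ
  set S := (Finset.Icc 2 n0).filter (fun n => ∀ p ∈ primesTo z, ¬ p ∣ n) with hS
  set f : ℕ → Fin 3 → ℂ := fun p => if p ∈ P then ![1, 1, 0] else ![1, 0, 0] with hf
  have hwl := abs_le.mp hw
  have h := hmv S (primesTo z) (cof ψ σ w) f T J (by linarith) (fun p hp => ((mem_primesTo z p).mp hp).2)
    (by
      intro r hr
      rw [hS, Finset.mem_filter, Finset.mem_Icc] at hr
      exact ⟨by omega, hr.2⟩)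
    (by
      intro r hr
      rw [hS, Finset.mem_filter, Finset.mem_Icc] at hr
      refine le_trans ?_ hle
      rw [prod_primesTo]
      gcongr
      exact hr.1.2) hJm hJ
  set R : ℝ → ℂ := fun t => ∏ p ∈ P, (1 + osc p t) with hR
  have hRc : Continuous R := by
    apply continuous_finsetProd
    intro p _
    exact continuous_const.add (osc_continuous p)
  have hRb : ∀ t, ‖R t‖^2 ≤ 4^P.card := by
    intro t
    have : ‖R t‖ ≤ 2^P.card := by
      rw [hR]; simp only
      rw [norm_prod, ← Finset.prod_const]
      refine Finset.prod_le_prod (fun _ _ => norm_nonneg _) fun p _ => ?_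
      refine (norm_add_le _ _).trans ?_
      rw [osc_norm, norm_one]; norm_num
    calc ‖R t‖^2 ≤ (2^P.card)^2 := by gcongr
      _ = 4^P.card := by rw [← pow_mul, mul_comm, pow_mul]; norm_num
  have hRf : ∀ t, R t = ∏ p ∈ primesTo z, ∑ e : Fin 3, f p e * osc p t ^ (e : ℕ) := by
    intro t
    have : R t = ∏ p ∈ primesTo z, if p ∈ P then (1 + osc p t) else 1 := by
      rw [Finset.prod_ite_mem, Finset.inter_eq_right.mpr hPz]
    rw [this]
    refine Finset.prod_congr rfl fun p _ => ?_
    rw [Fin.sum_univ_three]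
    by_cases hp : p ∈ P
    · simp [hf, hp]
    · simp [hf, hp]
  have hfn : ∏ p ∈ primesTo z, ∑ e : Fin 3, ‖f p e‖^2 = 2^P.card := by
    have : ∀ p ∈ primesTo z, ∑ e : Fin 3, ‖f p e‖^2 = if p ∈ P then 2 else 1 := by
      intro p _
      rw [Fin.sum_univ_three]
      by_cases hp : p ∈ P
      · simp [hf, hp]; norm_num
      · simp [hf, hp]
    rw [Finset.prod_congr rfl this, Finset.prod_ite_mem, Finset.inter_eq_right.mpr hPz, Finset.prod_const]
  have hSn : ∑ r ∈ S, ‖cof ψ σ w r‖^2 ≤ ε := by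
    refine (Finset.sum_le_sum fun r _ => cof_norm_sq ψ σ w r).trans (hε S ?_)
    intro n hn
    rw [hS, Finset.mem_filter, Finset.mem_Icc] at hn
    by_contra hlt
    have hpr := Nat.minFac_prime (n := n) (by omega)
    exact hn.2 n.minFac ((mem_primesTo _ _).mpr ⟨(Nat.minFac_le (by omega)).trans (not_lt.mp hlt), hpr⟩)
      (Nat.minFac_dvd n)
  set D : ℝ → ℂ := fun t => ∑ r ∈ S, cof ψ σ w r * osc r t with hD
  have hDc : Continuous D := by
    apply continuous_finsetSum
    intro r _
    exact continuous_const.mul (osc_continuous r)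
  have hDR : ∫ t in J, ‖D t * R t‖^2 ≤ K * T * (ε * 2^P.card) := by
    simp_rw [hRf]
    refine h.trans ?_
    rw [hfn]
    gcongr
  set E : ℝ → ℂ := fun t => ψ.LFunction ((σ:ℂ) + ((t + w : ℝ):ℂ) * Complex.I)
      - ∑ n ∈ Finset.Icc 1 n0, ψ n * (n:ℂ)^(-((σ:ℂ) + ((t + w : ℝ):ℂ) * Complex.I)) with hE
  have hsumeq : ∀ t, ∑ n ∈ Finset.Icc 1 n0, ψ n * (n:ℂ)^(-((σ:ℂ) + ((t + w : ℝ):ℂ) * Complex.I)) = 1 + D t := by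
    intro t
    have h1 : Finset.Icc 1 n0 = insert 1 (Finset.Icc 2 n0) := by
      ext x; simp only [Finset.mem_Icc, Finset.mem_insert]; omega
    rw [h1, Finset.sum_insert (by simp)]
    congr 1
    · simp
    · rw [hD, hS]
      simp only
      rw [Finset.sum_filter]
      refine Finset.sum_congr rfl fun n hn => ?_
      rw [Finset.mem_Icc] at hn
      split_ifs with hc
      · rw [cpow_osc n (by omega)]
        unfold cof
        ring
      · push Not at hc
        obtain ⟨p, hp, hpn⟩ := hc
        have : ψ (n : ZMod (N * primorial z)) = 0 := by
          apply MulChar.map_nonunit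
          rw [ZMod.isUnit_iff_coprime]
          intro hcop
          have hpp := ((mem_primesTo z p).mp hp).2
          have hd : p ∣ N * primorial z := by
            apply Dvd.dvd.mul_left
            rw [← prod_primesTo]
            exact Finset.dvd_prod_of_mem _ hp
          exact hpp.one_lt.ne' (Nat.eq_one_of_dvd_coprimes hcop hpn hd)
        rw [this, zero_mul]
  have hErr := error_ms ψ n0 hn0 σ hσ1 hσ2 T hT J hJm hJ w hw
  have hEc : ContinuousOn E (Icc T (2*T)) := by
    have h1 := L_cont ψ σ T w hT hw
    have : E = fun t => ψ.LFunction ((σ:ℂ) + ((t + w : ℝ):ℂ) * Complex.I) - (1 + D t) := by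
      funext t; rw [← hsumeq t]
    rw [this]
    exact h1.sub (continuous_const.add hDc).continuousOn
  have hEi : MeasureTheory.IntegrableOn (fun t => ‖E t‖^2) J :=
    ((hEc.norm.pow 2).integrableOn_Icc).mono_set hJ
  have hDi : MeasureTheory.IntegrableOn (fun t => ‖D t * R t‖^2) J :=
    ((((hDc.mul hRc).norm.pow 2).continuousOn).integrableOn_Icc).mono_set hJ
  have hstep : ∫ t in J, ‖(χ.LFunction ((σ:ℂ) + ((t + w : ℝ):ℂ) * Complex.I) *
        (∏ p ∈ primesTo z, (1 - cof χ σ w p * osc p t)) - 1) * R t‖^2 ≤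
      ∫ t in J, (2 * ‖D t * R t‖^2 + 2 * 4^P.card * ‖E t‖^2) := by
    apply MeasureTheory.integral_mono_of_nonneg
    · exact Filter.Eventually.of_forall fun t => by positivity
    · exact (hDi.const_mul _).add (hEi.const_mul _)
    · filter_upwards [MeasureTheory.self_mem_ae_restrict hJm] with t ht
      have ht := hJ ht
      rw [← L_mul_Q χ z hNz σ t w (by linarith [ht.1])]
      have heq : (ψ.LFunction ((σ:ℂ) + ((t + w : ℝ):ℂ) * Complex.I) - 1) * R t = D t * R t + E t * R t := by
        rw [hE]; simp only; rw [hsumeq]; ring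
      rw [heq]
      have h1 := pow_le_pow_left₀ (norm_nonneg _) (norm_add_le (D t * R t) (E t * R t)) 2
      refine h1.trans ?_
      have h2 : ‖E t * R t‖^2 ≤ 4^P.card * ‖E t‖^2 := by
        rw [norm_mul, mul_pow, mul_comm]
        gcongr
        exact hRb t
      nlinarith [sq_nonneg (‖D t * R t‖ - ‖E t * R t‖)]
  refine hstep.trans ?_
  rw [MeasureTheory.integral_add (hDi.const_mul _) (hEi.const_mul _),
    MeasureTheory.integral_const_mul, MeasureTheory.integral_const_mul]
  apply add_le_add
  · calc _ ≤ 2 * (K * T * (ε * 2^P.card)) := by gcongr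
      _ = _ := by ring
  · gcongr

set_option maxHeartbeats 1000000 in
lemma err_num (σ : ℝ) (hσ1 : 1/2 < σ) (hσ2 : σ < 1) (N : ℕ) (η : ℝ) (hη : 0 < η) :
    ∃ Y0 : ℝ, ∀ (T Y : ℝ) (z n : ℕ), 1 ≤ T → Y = T^((2*σ-1)/2) → Y0 ≤ Y → (2:ℝ)^(13*z) ≤ Y → n ≤ z →
      2 * 4^n * (2 * (4 * ((⌊T / 16^z⌋₊ : ℕ):ℝ)^(2-2*σ) / T) +
        2 * (16 * T^2 * (exp 4 * (2*π) * (9 * ((N * primorial z : ℕ):ℝ)^2 *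
          ((⌊T / 16^z⌋₊ : ℕ):ℝ)^(-(2*σ)))))) ≤ T * 2^n * η := by
  set C : ℝ := 2304 * (exp 4 * (2*π)) * (N:ℝ)^2 with hC
  have hC0 : 0 ≤ C := by positivity
  refine ⟨max (32/η) (2*C/η), ?_⟩
  intro T Y z n hT hY hY0 hz hn
  have hT0 : 0 < T := by linarith
  have hYpos : 0 < Y := by rw [hY]; positivity
  have hYsq : Y^2 = T^(2*σ-1) := by
    rw [hY, ← Real.rpow_natCast, ← Real.rpow_mul hT0.le]; congr 1; push_cast; ring
  have hY2T : Y^2 ≤ T := by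
    rw [hYsq]
    calc T^(2*σ-1) ≤ T^(1:ℝ) := Real.rpow_le_rpow_of_exponent_le hT (by linarith)
      _ = T := Real.rpow_one T
  have hy1 : 32 ≤ η * Y := by
    have := (le_max_left _ _).trans hY0
    rwa [div_le_iff₀ hη, mul_comm] at this
  have hy2 : 2 * C ≤ η * Y := by
    have := (le_max_right _ _).trans hY0
    rw [div_le_iff₀ hη] at this
    linarith
  set X : ℝ := 2^z with hX
  have hX1 : 1 ≤ X := one_le_pow₀ (by norm_num)
  have hX13 : X^13 ≤ Y := by rw [hX, ← pow_mul, mul_comm]; exact hz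
  have h16 : (16:ℝ)^z = X^4 := by rw [hX, ← pow_mul, mul_comm, pow_mul]; norm_num
  have h4z : (4:ℝ)^z = X^2 := by rw [hX, ← pow_mul, mul_comm, pow_mul]; norm_num
  have hXY : X ≤ Y := le_trans (by simpa using pow_le_pow_right₀ hX1 (show 1 ≤ 13 by norm_num)) hX13
  have hX4Y : X^4 ≤ Y := le_trans (pow_le_pow_right₀ hX1 (show 4 ≤ 13 by norm_num)) hX13
  have hY1 : 1 ≤ Y := hX1.trans hXY
  have hX4T : X^4 ≤ T := hX4Y.trans (le_trans (by nlinarith) hY2T)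
  rw [h16]
  set n0 : ℝ := ((⌊T / X^4⌋₊ : ℕ):ℝ) with hn0
  have hdiv1 : 1 ≤ T / X^4 := by rw [one_le_div (by positivity)]; exact hX4T
  have hn0le : n0 ≤ T := by
    refine (Nat.floor_le (by positivity)).trans ?_
    exact div_le_self hT0.le (one_le_pow₀ hX1)
  have hn0ge : T / (2 * X^4) ≤ n0 := by
    have h1 : (1:ℝ) ≤ n0 := by
      rw [hn0]; exact_mod_cast Nat.one_le_floor_iff _ |>.mpr hdiv1
    have h2 := Nat.lt_floor_add_one (T / X^4)
    have h3 : T / (2 * X^4) = (T / X^4) / 2 := by field_simp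
    rw [h3]
    linarith
  have hn00 : 0 < n0 := lt_of_lt_of_le (by positivity) hn0ge
  have t1 : n0^(2-2*σ) ≤ T := by
    calc n0^(2-2*σ) ≤ T^(2-2*σ) := Real.rpow_le_rpow hn00.le hn0le (by linarith)
      _ ≤ T^(1:ℝ) := Real.rpow_le_rpow_of_exponent_le hT (by linarith)
      _ = T := Real.rpow_one T
  have t2 : n0^(-(2*σ)) ≤ 4 * X^8 * T^(-(2*σ)) := by
    calc n0^(-(2*σ)) ≤ (T / (2 * X^4))^(-(2*σ)) :=
          Real.rpow_le_rpow_of_nonpos (by positivity) hn0ge (by linarith)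
      _ = (2*X^4)^(2*σ) * T^(-(2*σ)) := by
          rw [Real.div_rpow hT0.le (by positivity), Real.rpow_neg (x := 2 * X^4) (by positivity), div_inv_eq_mul, mul_comm]
      _ ≤ (2*X^4)^(2:ℝ) * T^(-(2*σ)) := by
          gcongr
          · nlinarith [one_le_pow₀ hX1 (n := 4)]
          · linarith
      _ = 4 * X^8 * T^(-(2*σ)) := by
          rw [Real.rpow_two]; ring
  have hprim : ((N * primorial z : ℕ):ℝ)^2 ≤ (N:ℝ)^2 * X^4 := by
    push_cast
    rw [mul_pow]
    have : ((primorial z : ℕ):ℝ) ≤ X^2 := by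
      rw [← h4z]; exact_mod_cast primorial_le_four_pow z
    calc _ ≤ (N:ℝ)^2 * (X^2)^2 := by gcongr
      _ = _ := by ring
  have h4n : (4:ℝ)^n = 2^n * 2^n := by rw [← mul_pow]; norm_num
  have h2n : (2:ℝ)^n ≤ X := pow_le_pow_right₀ (by norm_num) hn
  have hTT : T^2 * T^(-(2*σ)) * Y^2 = T := by
    rw [hYsq, ← Real.rpow_natCast, ← Real.rpow_add hT0, ← Real.rpow_add hT0]
    conv_rhs => rw [← Real.rpow_one T]
    congr 1; push_cast; ring
  have hTY : T^2 * T^(-(2*σ)) * Y = T / Y := by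
    rw [eq_div_iff hYpos.ne']
    calc _ = T^2 * T^(-(2*σ)) * Y^2 := by ring
      _ = T := hTT
  have s1 : 2 * X * (2 * (4 * n0^(2-2*σ) / T)) ≤ T * η / 2 := by
    calc 2 * X * (2 * (4 * n0^(2-2*σ) / T)) ≤ 2 * Y * (2 * (4 * T / T)) := by gcongr
      _ = 16 * Y := by field_simp; ring
      _ ≤ η * Y^2 / 2 := by nlinarith
      _ ≤ T * η / 2 := by nlinarith
  have s2 : 2 * X * (2 * (16 * T^2 * (exp 4 * (2*π) * (9 * ((N * primorial z : ℕ):ℝ)^2 * n0^(-(2*σ)))))) ≤ T * η / 2 := by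
    calc _ ≤ 2 * X * (2 * (16 * T^2 * (exp 4 * (2*π) * (9 * ((N:ℝ)^2 * X^4) * (4 * X^8 * T^(-(2*σ))))))) := by gcongr
      _ = C * (T^2 * T^(-(2*σ)) * X^13) := by rw [hC]; ring
      _ ≤ C * (T^2 * T^(-(2*σ)) * Y) := by gcongr
      _ = C * T / Y := by rw [hTY]; ring
      _ ≤ T * η / 2 := by
          rw [div_le_iff₀ hYpos]
          have := mul_le_mul_of_nonneg_left hy2 hT0.le
          linarith
  have fin : ∀ a1 a2 : ℝ, 0 ≤ a1 → 0 ≤ a2 → 2 * X * a1 ≤ T * η / 2 → 2 * X * a2 ≤ T * η / 2 →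
      2 * 4^n * (a1 + a2) ≤ T * 2^n * η := by
    intro a1 a2 ha1 ha2 h1 h2
    calc 2 * 4^n * (a1 + a2) = 2^n * (2 * 2^n * a1 + 2 * 2^n * a2) := by rw [h4n]; ring
      _ ≤ 2^n * (2 * X * a1 + 2 * X * a2) := by gcongr
      _ ≤ 2^n * (T * η / 2 + T * η / 2) := by gcongr
      _ = _ := by ring
  exact fin _ _ (by positivity) (by positivity) s1 s2

lemma exists_good {k : ℕ} (J : Set ℝ) (hJc : IsCompact J) (F G : Fin k → ℝ → ℂ) (R : ℝ → ℂ)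
    (hF : ∀ j, ContinuousOn (F j) J) (hG : ∀ j, ContinuousOn (G j) J) (hR : ContinuousOn R J) (W : ℝ)
    (hW : 0 < W)
    (h : (∑ j, (4 * ∫ t in J, ‖F j t * R t‖^2)) + ∑ j, (W * ∫ t in J, ‖G j t * R t‖^2) <
      ∫ t in J, ‖R t‖^2) :
    ∃ t ∈ J, ∀ j, ‖F j t‖ < 1/2 ∧ W * ‖G j t‖^2 < 1 := by
  by_contra hcon
  push Not at hcon
  have hJm : MeasurableSet J := hJc.measurableSet
  have hFi : ∀ j, MeasureTheory.IntegrableOn (fun t => 4 * ‖F j t * R t‖^2) J := fun j =>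
    (ContinuousOn.integrableOn_compact hJc (((hF j).mul hR).norm.pow 2)).const_mul _
  have hGi : ∀ j, MeasureTheory.IntegrableOn (fun t => W * ‖G j t * R t‖^2) J := fun j =>
    (ContinuousOn.integrableOn_compact hJc (((hG j).mul hR).norm.pow 2)).const_mul _
  have hRi : MeasureTheory.IntegrableOn (fun t => ‖R t‖^2) J :=
    ContinuousOn.integrableOn_compact hJc (hR.norm.pow 2)
  have hsF := MeasureTheory.integrable_finsetSum Finset.univ (fun j _ => hFi j)
  have hsG := MeasureTheory.integrable_finsetSum Finset.univ (fun j _ => hGi j)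
  have hle : ∫ t in J, ‖R t‖^2 ≤ ∫ t in J, ((∑ j, 4 * ‖F j t * R t‖^2) + ∑ j, W * ‖G j t * R t‖^2) := by
    apply MeasureTheory.setIntegral_mono_on hRi (hsF.add hsG) hJm
    intro t ht
    obtain ⟨j, hj⟩ := hcon t ht
    change ‖R t‖^2 ≤ (∑ j, 4 * ‖F j t * R t‖^2) + ∑ j, W * ‖G j t * R t‖^2
    by_cases hc : ‖F j t‖ < 1/2
    · have h1 := hj hc
      have h2 : W * ‖G j t * R t‖^2 ≤ ∑ j, W * ‖G j t * R t‖^2 :=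
        Finset.single_le_sum (f := fun j => W * ‖G j t * R t‖^2) (fun i _ => by positivity) (Finset.mem_univ j)
      have h3 : 0 ≤ ∑ j, 4 * ‖F j t * R t‖^2 := Finset.sum_nonneg fun i _ => by positivity
      have h4 : ‖R t‖^2 ≤ W * ‖G j t * R t‖^2 := by
        rw [norm_mul, mul_pow]
        nlinarith [sq_nonneg ‖R t‖]
      linarith
    · have h1 := not_lt.mp hc
      have h2 : 4 * ‖F j t * R t‖^2 ≤ ∑ j, 4 * ‖F j t * R t‖^2 :=
        Finset.single_le_sum (f := fun j => 4 * ‖F j t * R t‖^2) (fun i _ => by positivity) (Finset.mem_univ j)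
      have h3 : 0 ≤ ∑ j, W * ‖G j t * R t‖^2 := Finset.sum_nonneg fun i _ => by positivity
      have h4 : ‖R t‖^2 ≤ 4 * ‖F j t * R t‖^2 := by
        rw [norm_mul, mul_pow]
        have : 1/4 ≤ ‖F j t‖^2 := by nlinarith
        nlinarith [sq_nonneg ‖R t‖]
      linarith
  rw [MeasureTheory.integral_add hsF hsG, MeasureTheory.integral_finsetSum _ (fun j _ => hFi j),
    MeasureTheory.integral_finsetSum _ (fun j _ => hGi j)] at hle
  simp only [MeasureTheory.integral_const_mul] at hle
  linarith

lemma tail_small (σ : ℝ) (hσ1 : 1/2 < σ) (ε : ℝ) (hε : 0 < ε) : ∃ z0 : ℕ, ∀ z : ℕ, z0 ≤ z →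
    ∀ S : Finset ℕ, (∀ n ∈ S, z < n) → ∑ n ∈ S, (n:ℝ)^(-(2*σ)) ≤ ε := by
  have hsum : Summable (fun n : ℕ => (n:ℝ)^(-(2*σ))) := Real.summable_nat_rpow.mpr (by linarith)
  obtain ⟨s, hs⟩ := summable_iff_vanishing_norm.mp hsum ε hε
  refine ⟨s.sup id, fun z hz S hS => ?_⟩
  have hd : Disjoint S s := by
    rw [Finset.disjoint_left]
    intro a ha has
    have h1 := hS a ha
    have h2 : a ≤ s.sup id := Finset.le_sup (f := id) has
    omega
  exact (le_abs_self _).trans (hs S hd).le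

lemma G_large (a B : ℝ) (ha : 0 < a) : ∀ᶠ T : ℝ in Filter.atTop,
    B ≤ (Real.log T)^a / Real.log (Real.log T) := by
  have e1 : ∀ᶠ x : ℝ in Filter.atTop, ‖Real.log x‖ ≤ (1/(|B|+1)) * ‖x^a‖ :=
    (isLittleO_log_rpow_atTop ha).bound (by positivity)
  have e2 := Filter.eventually_gt_atTop (1:ℝ)
  filter_upwards [Real.tendsto_log_atTop.eventually (e1.and e2)] with T hT
  obtain ⟨h1, h2⟩ := hT
  have hl : 0 < Real.log (Real.log T) := Real.log_pos h2
  rw [Real.norm_of_nonneg hl.le, Real.norm_of_nonneg (by positivity)] at h1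
  rw [le_div_iff₀ hl]
  have h3 : (|B|+1) * Real.log (Real.log T) ≤ (Real.log T)^a := by
    rw [one_div, inv_mul_eq_div, le_div_iff₀ (by positivity)] at h1
    linarith
  nlinarith [le_abs_self B]

lemma V_lower (σ c1 δ T : ℝ) (z n : ℕ) (hσ2 : σ < 1) (hσ1 : 0 < σ) (hc1 : 0 < c1) (hδ : 0 < δ) (hδ1 : δ ≤ 1)
    (hz3 : 3 ≤ z) (hz : z = ⌊δ * Real.log T⌋₊) (hn : c1 * z / Real.log z ≤ n) :
    8 * ((c1/16) * (δ/2)^(1-σ)) * ((Real.log T)^(1-σ) / Real.log (Real.log T)) ≤ n * (z:ℝ)^(-σ) / 2 := by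
  have hz3' : (3:ℝ) ≤ z := by exact_mod_cast hz3
  have hlT : 0 < δ * Real.log T := by
    by_contra h
    rw [Nat.floor_of_nonpos (not_lt.mp h)] at hz
    omega
  have hlT' : 0 < Real.log T := by
    by_contra h
    nlinarith [not_lt.mp h]
  have h1 : (z:ℝ) ≤ δ * Real.log T := by rw [hz]; exact Nat.floor_le hlT.le
  have h2 : δ * Real.log T < z + 1 := by rw [hz]; exact Nat.lt_floor_add_one _
  have h3 : δ / 2 * Real.log T ≤ z := by linarith
  have h4 : (z:ℝ) ≤ Real.log T := by nlinarith
  have hlz : 0 < Real.log z := Real.log_pos (by linarith)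
  have h5 : Real.log z ≤ Real.log (Real.log T) := Real.log_le_log (by linarith) h4
  have hpow : (δ/2)^(1-σ) * (Real.log T)^(1-σ) ≤ (z:ℝ)^(1-σ) := by
    rw [← Real.mul_rpow (by positivity) hlT'.le]
    exact Real.rpow_le_rpow (by positivity) h3 (by linarith)
  have hzs : (z:ℝ)^(1-σ) = z * (z:ℝ)^(-σ) := by
    rw [sub_eq_add_neg, Real.rpow_add (by linarith), Real.rpow_one]
  calc _ = c1 / 2 * (((δ/2)^(1-σ) * (Real.log T)^(1-σ)) / Real.log (Real.log T)) := by ring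
    _ ≤ c1 / 2 * ((z:ℝ)^(1-σ) / Real.log z) := by gcongr
    _ = (c1 * z / Real.log z) * (z:ℝ)^(-σ) / 2 := by rw [hzs]; ring
    _ ≤ _ := by gcongr

lemma pow_le_Y (σ T : ℝ) (z : ℕ) (hσ1 : 1/2 < σ) (hT : 1 ≤ T)
    (hz : z = ⌊(2*σ-1)/26 * Real.log T⌋₊) : (2:ℝ)^(13*z) ≤ T^((2*σ-1)/2) := by
  have hlT : 0 ≤ Real.log T := Real.log_nonneg hT
  have h1 : (z:ℝ) ≤ (2*σ-1)/26 * Real.log T := by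
    rw [hz]; exact Nat.floor_le (mul_nonneg (by linarith) hlT)
  have hl2 : Real.log 2 ≤ 1 := by linarith [Real.log_two_lt_d9]
  have hl20 : 0 ≤ Real.log 2 := Real.log_nonneg (by norm_num)
  rw [← Real.rpow_natCast, Real.rpow_def_of_pos (by norm_num : (0:ℝ) < 2), Real.rpow_def_of_pos (by linarith)]
  apply Real.exp_le_exp.mpr
  push_cast
  have hz0 : (0:ℝ) ≤ z := by positivity
  calc Real.log 2 * (13 * z) ≤ 1 * (13 * z) := by gcongr
    _ ≤ _ := by linarith

set_option maxHeartbeats 2000000 in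
lemma core (σ : ℝ) (hσ1 : 1/2 < σ) (hσ2 : σ < 1)
    (k : ℕ) (hk : 1 ≤ k) (N : Fin k → ℕ) [∀ j, NeZero (N j)]
    (χ : ∀ j, DirichletCharacter ℂ (N j)) :
    ∃ c : ℝ, 0 < c ∧ ∀ᶠ T : ℝ in Filter.atTop, ∃ (t : ℝ) (w : Fin k → ℝ),
      t ∈ Icc (5*T/4) (7*T/4) ∧ (∀ j, |w j| ≤ π) ∧
      ∀ j, Real.exp (c * (Real.log T) ^ (1 - σ) / Real.log (Real.log T)) ≤
        ‖(χ j).LFunction ((σ : ℂ) + ((t + w j : ℝ) : ℂ) * Complex.I)‖ := by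
  obtain ⟨KA, hKA, hA⟩ := bound_A σ hσ1
  obtain ⟨KB, hKB, hB⟩ := bound_B σ hσ1 hσ2
  obtain ⟨c1, hc1, z1, hsel⟩ := prime_sel_chars k N χ
  have hk0 : (0:ℝ) < k := by exact_mod_cast hk
  set δ := (2*σ-1)/26 with hδdef
  have hδ : 0 < δ := by rw [hδdef]; linarith
  have hδ1 : δ ≤ 1 := by rw [hδdef]; linarith
  set ε := 1/(256*k*KB) with hε
  have hε0 : 0 < ε := by positivity
  obtain ⟨z2, htail⟩ := tail_small σ hσ1 ε hε0
  set η := 1/(256*(k:ℝ)) with hη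
  have hη0 : 0 < η := by positivity
  choose Y0 hY0 using fun j => err_num σ hσ1 hσ2 (N j) η hη0
  set c := (c1/16) * (δ/2)^(1-σ) with hc
  have hc0 : 0 < c := by positivity
  refine ⟨c, hc0, ?_⟩
  have hfl : Filter.Tendsto (fun T : ℝ => ⌊δ * Real.log T⌋₊) Filter.atTop Filter.atTop :=
    tendsto_nat_floor_atTop.comp (Real.tendsto_log_atTop.const_mul_atTop hδ)
  have hYt : Filter.Tendsto (fun T : ℝ => T^((2*σ-1)/2)) Filter.atTop Filter.atTop :=
    tendsto_rpow_atTop (by linarith)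
  filter_upwards [Filter.eventually_ge_atTop (16:ℝ), hfl.eventually_ge_atTop z1,
    hfl.eventually_ge_atTop z2, hfl.eventually_ge_atTop 3,
    Filter.eventually_all.mpr (fun j => hfl.eventually_ge_atTop (N j)),
    Filter.eventually_all.mpr (fun j => hYt.eventually_ge_atTop (Y0 j)),
    hYt.eventually_ge_atTop 8, G_large (1-σ) (1/c) (by linarith),
    G_large (1-σ) (8*k*KA/c) (by linarith)] with T hT hz1 hz2 hz3 hzN hYj hY8 hG1 hG2
  set z := ⌊δ * Real.log T⌋₊ with hz
  set Y := T^((2*σ-1)/2) with hY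
  set G := (Real.log T)^(1-σ) / Real.log (Real.log T) with hG
  obtain ⟨P, w, hP, hw, hre, hcard⟩ := hsel z hz1
  have hT0 : 0 < T := by linarith
  have hz3' : (3:ℝ) ≤ z := by exact_mod_cast hz3
  have hlz : 1 ≤ Real.log z := by
    rw [Real.le_log_iff_exp_le (by linarith)]
    linarith [Real.exp_one_lt_d9]
  have hwpi : ∀ j, |w j| ≤ π := fun j => (hw j).trans (div_le_self Real.pi_pos.le hlz)
  have hwT : ∀ j, |w j| ≤ T/2 := fun j => (hwpi j).trans (by linarith [Real.pi_le_four])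
  have hPz : P ⊆ primesTo z := fun p hp => (mem_primesTo z p).mpr ⟨(hP p hp).2, (hP p hp).1⟩
  have hnz : P.card ≤ z := by
    have : P ⊆ Finset.Icc 1 z := fun p hp => Finset.mem_Icc.mpr ⟨(hP p hp).1.one_le, (hP p hp).2⟩
    have h := Finset.card_le_card this
    simpa using h
  have hV := V_lower σ c1 δ T z P.card hσ2 (by linarith) hc1 hδ hδ1 hz3 hz hcard
  rw [← hc, ← hG] at hV
  set V := P.card * (z:ℝ)^(-σ) / 2 with hVdef
  have h2Y : (2:ℝ)^(13*z) ≤ Y := pow_le_Y σ T z hσ1 (by linarith) hz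
  have hY2T : Y^2 ≤ T := by
    have : Y^2 = T^(2*σ-1) := by
      rw [hY, ← Real.rpow_natCast, ← Real.rpow_mul hT0.le]; congr 1; push_cast; ring
    rw [this]
    calc T^(2*σ-1) ≤ T^(1:ℝ) := Real.rpow_le_rpow_of_exponent_le (by linarith) (by linarith)
      _ = T := Real.rpow_one T
  have hprim4 : ((primorial z : ℕ):ℝ) ≤ 4^z := by exact_mod_cast primorial_le_four_pow z
  have hprim16 : ((primorial z : ℕ):ℝ)^2 ≤ 16^z := by
    calc ((primorial z : ℕ):ℝ)^2 ≤ ((4:ℝ)^z)^2 := by gcongr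
      _ = 16^z := by rw [← pow_mul, mul_comm, pow_mul]; norm_num
  have h16Y : (16:ℝ)^z ≤ Y := by
    refine le_trans ?_ h2Y
    rw [show (16:ℝ) = 2^4 by norm_num, ← pow_mul]
    exact pow_le_pow_right₀ (by norm_num) (by omega)
  have h8Y : (8:ℝ)^z ≤ Y := by
    refine le_trans ?_ h2Y
    rw [show (8:ℝ) = 2^3 by norm_num, ← pow_mul]
    exact pow_le_pow_right₀ (by norm_num) (by omega)
  have h16T : (16:ℝ)^z ≤ T := h16Y.trans (le_trans (by nlinarith) hY2T)
  set n0 := ⌊T / 16^z⌋₊ with hn0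
  have hn01 : 1 ≤ n0 := (Nat.one_le_floor_iff _).mpr (by rw [one_le_div (by positivity)]; exact h16T)
  have hn0T : (n0:ℝ) * ((primorial z : ℕ):ℝ)^2 ≤ T := by
    calc (n0:ℝ) * ((primorial z : ℕ):ℝ)^2 ≤ (T / 16^z) * 16^z := by
          gcongr
          exact Nat.floor_le (by positivity)
      _ = T := by field_simp
  set J := Icc (5*T/4) (7*T/4) with hJ
  have hJT : J ⊆ Icc T (2*T) := Icc_subset_Icc (by linarith) (by linarith)
  have hJm : MeasurableSet J := measurableSet_Icc
  set R : ℝ → ℂ := fun t => ∏ p ∈ P, (1 + osc p t) with hR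
  set Q : Fin k → ℝ → ℂ := fun j t => ∏ p ∈ primesTo z, (1 - cof (χ j) σ (w j) p * osc p t) with hQ
  set L : Fin k → ℝ → ℂ := fun j t => (χ j).LFunction ((σ : ℂ) + ((t + w j : ℝ) : ℂ) * Complex.I) with hL
  set M : ℝ := T * 2^P.card with hM
  have hM0 : 0 < M := by positivity
  have hRlow : M / 4 ≤ ∫ t in J, ‖R t‖^2 := by
    have h := reson_lower P (fun p hp => (hP p hp).1) (4^z) (by
      refine le_trans ?_ hprim4
      rw [← prod_primesTo]
      norm_cast
      exact Finset.prod_le_prod_of_subset_of_one_le' hPz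
        fun p hp _ => ((mem_primesTo z p).mp hp).2.one_le) (5*T/4) (7*T/4) (by linarith)
    refine le_trans ?_ h
    have h4n : (4:ℝ)^P.card = 2^P.card * 2^P.card := by rw [← mul_pow]; norm_num
    have h2n : (2:ℝ)^P.card ≤ 2^z := pow_le_pow_right₀ (by norm_num) hnz
    have h3 : (2:ℝ)^P.card * 4^z ≤ 8^z := by
      calc (2:ℝ)^P.card * 4^z ≤ 2^z * 4^z := by gcongr
        _ = 8^z := by rw [← mul_pow]; norm_num
    have h4 : (2:ℝ)^P.card * 4^z ≤ T / 8 := by nlinarith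
    have h5 : (0:ℝ) < 2^P.card := by positivity
    rw [hM, h4n]
    nlinarith
  have hAj : ∀ j, ∫ t in J, ‖Q j t * R t‖^2 ≤ KA * M * Real.exp (-V) := by
    intro j
    have h := hA (χ j) (w j) z P T J hT0 hPz (hre j) (hprim16.trans h16T) hJm hJT
    refine h.trans (le_of_eq ?_)
    rw [hM]; ring
  have hBj : ∀ j, ∫ t in J, ‖(L j t * Q j t - 1) * R t‖^2 ≤ KB * M * ε + M * η := by
    intro j
    have h := hB (χ j) (w j) z n0 P T ε J (by linarith) hPz (hzN j) hn01 (hwT j) (htail z hz2) hn0T hJm hJT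
    have h2 := hY0 j T Y z P.card (by linarith) hY (hYj j) h2Y hnz
    refine h.trans ?_
    rw [hM]
    have h3 : KB * T * 2 ^ P.card * ε = KB * (T * 2^P.card) * ε := by ring
    rw [h3]
    exact add_le_add (le_refl _) h2
  have hcG1 : 1 ≤ c * G := by
    rw [div_le_iff₀ hc0] at hG1; linarith
  have hcG2 : 8*k*KA ≤ c * G := by
    rw [div_le_iff₀ hc0] at hG2; linarith
  have hexpV : k * KA * Real.exp (-(V/2)) ≤ 1/32 := by
    have h1 : 32 * (k * KA) ≤ Real.exp (V/2) := by
      have := Real.add_one_le_exp (V/2)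
      linarith
    rw [Real.exp_neg, ← div_eq_mul_inv, div_le_iff₀ (Real.exp_pos _)]
    linarith
  have hRc : Continuous R := by
    apply continuous_finsetProd
    intro p _
    exact continuous_const.add (osc_continuous p)
  have hQc : ∀ j, Continuous (Q j) := by
    intro j
    apply continuous_finsetProd
    intro p _
    exact continuous_const.sub (continuous_const.mul (osc_continuous p))
  have hLc : ∀ j, ContinuousOn (L j) J := fun j =>
    (L_cont (χ j) σ T (w j) (by linarith) (hwT j)).mono hJT
  obtain ⟨t, htJ, ht⟩ := exists_good J isCompact_Icc (fun j t => L j t * Q j t - 1) Q R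
    (fun j => ((hLc j).mul (hQc j).continuousOn).sub continuousOn_const) (fun j => (hQc j).continuousOn)
    hRc.continuousOn (Real.exp (V/2)) (Real.exp_pos _) (by
      refine lt_of_lt_of_le ?_ hRlow
      have s1 : ∑ j : Fin k, (4 * ∫ t in J, ‖(L j t * Q j t - 1) * R t‖^2) ≤ M / 32 := by
        calc _ ≤ ∑ j : Fin k, 4 * (KB * M * ε + M * η) :=
              Finset.sum_le_sum fun j _ => by linarith [hBj j]
          _ = k * (4 * (KB * M * ε + M * η)) := by simp
          _ = M / 32 := by rw [hε, hη]; field_simp; ring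
      have s2 : ∑ j : Fin k, (Real.exp (V/2) * ∫ t in J, ‖Q j t * R t‖^2) ≤ M / 32 := by
        calc _ ≤ ∑ j : Fin k, Real.exp (V/2) * (KA * M * Real.exp (-V)) :=
              Finset.sum_le_sum fun j _ => mul_le_mul_of_nonneg_left (hAj j) (Real.exp_pos _).le
          _ = M * (k * KA * Real.exp (-(V/2))) := by
              have : Real.exp (-(V/2)) = Real.exp (V/2) * Real.exp (-V) := by
                rw [← Real.exp_add]; congr 1; ring
              rw [this]; simp; ring
          _ ≤ M * (1/32) := by gcongr
          _ = M / 32 := by ring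
      linarith)
  refine ⟨t, w, htJ, hwpi, fun j => ?_⟩
  obtain ⟨h1, h2⟩ := ht j
  change _ ≤ ‖L j t‖
  rw [mul_div_assoc, ← hG]
  have h3 : 1/2 < ‖L j t‖ * ‖Q j t‖ := by
    rw [← norm_mul]
    have h4 : ‖(1:ℂ)‖ ≤ ‖L j t * Q j t‖ + ‖L j t * Q j t - 1‖ := by
      have := norm_sub_le (L j t * Q j t) (L j t * Q j t - 1)
      rwa [sub_sub_cancel] at this
    rw [norm_one] at h4
    have h1' : ‖L j t * Q j t - 1‖ < 1/2 := h1
    linarith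
  have h5 : Real.exp (V/4) * ‖Q j t‖ < 1 := by
    have : (Real.exp (V/4) * ‖Q j t‖)^2 < 1 := by
      rw [mul_pow, ← Real.exp_nat_mul]
      have : ((2:ℕ):ℝ) * (V/4) = V/2 := by push_cast; ring
      rw [this]; exact h2
    exact (sq_lt_one_iff₀ (by positivity)).mp this
  have h6 : Real.exp (V/4) ≤ 2 * ‖L j t‖ := by
    have hQ0 : 0 < ‖Q j t‖ := by
      by_contra hq
      have : ‖Q j t‖ = 0 := le_antisymm (not_lt.mp hq) (norm_nonneg _)
      rw [this] at h3; linarith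
    by_contra hlt
    push Not at hlt
    nlinarith
  have h7 : Real.exp (c*G) * Real.exp (c*G) ≤ Real.exp (V/4) := by
    rw [← Real.exp_add]; apply Real.exp_le_exp.mpr; linarith
  have h8 : 2 ≤ Real.exp (c*G) := by linarith [Real.add_one_le_exp (c*G)]
  nlinarith [Real.exp_pos (c*G)]

/-- Joint large values of Dirichlet L-functions of distinct primitive characters on the
vertical line `Re s = σ₀`: the case `θ_1 = ⋯ = θ_k = 0` of the main theorem. -/
theorem joint_large_values_dirichlet (σ₀ : ℝ) (hσ : σ₀ ∈ Set.Ioo (1/2 : ℝ) 1)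
    (k : ℕ) (hk : 1 ≤ k) (N : Fin k → ℕ) [∀ j, NeZero (N j)]
    (χ : ∀ j, DirichletCharacter ℂ (N j))
    (hprim : ∀ j, (χ j).IsPrimitive)
    (hdist : ∀ i j, i ≠ j → (fun n : ℕ => χ i (n : ZMod (N i))) ≠
      (fun n : ℕ => χ j (n : ZMod (N j)))) :
    ∃ c : ℝ, 0 < c ∧ ∃ T₀ : ℝ, ∀ T ≥ T₀, ∃ t : Fin k → ℝ,
      (∀ j, t j ∈ Set.Icc T (2 * T)) ∧
      (∀ i j, |t i - t j| ≤ 2 * (Real.log T) ^ ((1 + σ₀) / 2) *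
        Real.sqrt (Real.log (Real.log T))) ∧
      ∀ j, Real.exp (c * (Real.log T) ^ (1 - σ₀) / Real.log (Real.log T)) ≤
        ‖(χ j).LFunction ((σ₀ : ℂ) + (t j : ℂ) * Complex.I)‖ := by
  obtain ⟨hσ1, hσ2⟩ := hσ
  obtain ⟨c, hc, hcore⟩ := core σ₀ hσ1 hσ2 k hk N χ
  refine ⟨c, hc, ?_⟩
  have e1 : ∀ᶠ T : ℝ in Filter.atTop, 4 ≤ (Real.log T)^((1+σ₀)/2) :=
    ((tendsto_rpow_atTop (by linarith)).comp Real.tendsto_log_atTop).eventually_ge_atTop 4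
  have e2 : ∀ᶠ T : ℝ in Filter.atTop, 1 ≤ Real.log (Real.log T) :=
    (Real.tendsto_log_atTop.comp Real.tendsto_log_atTop).eventually_ge_atTop 1
  have hall := ((hcore.and e1).and e2).and (Filter.eventually_ge_atTop (16:ℝ))
  rw [Filter.eventually_atTop] at hall
  obtain ⟨T₀, hT₀⟩ := hall
  refine ⟨T₀, fun T hT => ?_⟩
  obtain ⟨⟨⟨⟨t, w, htJ, hw, hL⟩, h1⟩, h2⟩, h16⟩ := hT₀ T hT
  have hpi := Real.pi_le_four
  refine ⟨fun j => t + w j, fun j => ?_, fun i j => ?_, fun j => hL j⟩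
  · have := abs_le.mp (hw j)
    exact ⟨by linarith [htJ.1], by linarith [htJ.2]⟩
  · have hi := abs_le.mp (hw i)
    have hj := abs_le.mp (hw j)
    have hs : 1 ≤ Real.sqrt (Real.log (Real.log T)) := Real.one_le_sqrt.mpr h2
    have h8 : |t + w i - (t + w j)| ≤ 8 := by
      rw [abs_le]; constructor <;> linarith
    refine h8.trans ?_
    nlinarith
end
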